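/- Let n ≥ 2 and N ≥ 1. Fix x₀ ∈ ℝⁿ with |x₀| = 1 and a unit vector v₀ ∈ ℝⁿ with ⟪x₀, v₀⟫ = 0. Let A : ℝⁿ × ℝⁿ × ℝⁿ → Matrix (Fin N) (Fin N) ℂ be real-analytic, and let f : ℝⁿ → ℂ^N be continuous with support contained in the closed unit ball {x ∈ ℝⁿ : |x| ≤ 1}. Suppose there exists δ > 0 such that for every unit vector v ∈ ℝⁿ with |v − v₀| < δ, every p ∈ ℝⁿ with ⟪p, v⟫ = 0 and |p − x₀| < δ, and every differentiable U : ℝ → Matrix (Fin N) (Fin N) ℂ with U′(t) = −A(p, v, p + t v) · U(t) for all t ∈ ℝ, U(0) = Id, and U(t) invertible for all t ∈ ℝ, one has ∫_ℝ U(t)⁻¹ · f(p + t v) dt = 0. Then there exists ε > 0 such that f = 0 on the ball {x ∈ ℝⁿ : |x − x₀| < ε}. -/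

import Mathlib

open Matrix MeasureTheory
open scoped RealInnerProductSpace

attribute [local instance] Matrix.normedAddCommGroup Matrix.normedSpace

/-! Write a point near `x₀` as `z + (1 + σ - α ^ 2) x₀ + 2 α v₀` with `z` orthogonal to `x₀` and
`v₀`. The lines in the plane `z + span {x₀, v₀}` that are nearly parallel to `v₀` become the
parabolas `σ = q + (a - α) ^ 2`, and the unit ball lies in `σ + α ^ 2 ≤ 0`. After shifting `σ` and
zooming in on `x₀`, the attenuation along the parabolas is given by a power series in `(α, a, q)` of
small norm, so the Dyson series of the transport equation turns the hypothesis into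
`∫ (1 + T (α, a, q)) F (α, q + (a - α) ^ 2) dα = 0`, where `F` is `f` in the new coordinates and `T`
is again a small power series.

Integrate this against `a ^ i q ^ j`. The moments `L (k, i, j)` of `F (α, q + (a - α) ^ 2)` against
`α ^ k a ^ i q ^ j` satisfy
`L (k + 1, i, j) = L (k, i + 1, j) - i / (2 (j + 1)) L (k, i - 1, j + 1)`
by integration by parts, because the derivative of `F` in `σ` can be taken along `a` or along `q`.
So they grow at most like `2 ^ k` relative to the moments with `k = 0`, and the vanishing of the
integrals bounds the latter by a small multiple of themselves. All moments are therefore zero, and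
`F = 0` by the Stone–Weierstrass theorem.
-/

open Set Filter Topology
open scoped Ring Interval

section LinearODE

variable {E : Type*} [NormedAddCommGroup E] [NormedSpace ℝ E]

/-- The `n`-th term of the Dyson (iterated integral) series of the solution of
`y' = B y`, `y 0 = y₀`. -/
noncomputable def dysonTerm (B : ℝ → E →L[ℝ] E) (y₀ : E) : ℕ → ℝ → E
  | 0, _ => y₀
  | n + 1, t => ∫ s in (0 : ℝ)..t, B s (dysonTerm B y₀ n s)

variable {B : ℝ → E →L[ℝ] E} {y₀ : E}

lemma dysonTerm_succ_zero (n : ℕ) : dysonTerm B y₀ (n + 1) 0 = 0 :=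
  intervalIntegral.integral_same

lemma continuous_dysonTerm (hB : Continuous B) : ∀ n, Continuous (dysonTerm B y₀ n)
  | 0 => continuous_const
  | n + 1 => intervalIntegral.continuous_primitive
      (fun _ _ => (hB.clm_apply (continuous_dysonTerm hB n)).intervalIntegrable _ _) 0

lemma hasDerivAt_dysonTerm_succ [CompleteSpace E] (hB : Continuous B) (n : ℕ) (t : ℝ) :
    HasDerivAt (dysonTerm B y₀ (n + 1)) (B t (dysonTerm B y₀ n t)) t :=
  (hB.clm_apply (continuous_dysonTerm hB n)).integral_hasStrictDerivAt 0 t |>.hasDerivAt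

lemma norm_dysonTerm_le {T K : ℝ} (hK₀ : 0 ≤ K) (hK : ∀ t, |t| ≤ T → ‖B t‖ ≤ K) (n : ℕ) :
    ∀ t, |t| ≤ T → ‖dysonTerm B y₀ n t‖ ≤ ‖y₀‖ * ((K * |t|) ^ n / n.factorial) := by
  induction n with
  | zero => intro t _; simp [dysonTerm]
  | succ n ih =>
    intro t ht
    have integrand_le : ∀ s ∈ Ι (0 : ℝ) t, ‖B s (dysonTerm B y₀ n s)‖ ≤
        ‖y₀‖ * K ^ (n + 1) / n.factorial * |s - 0| ^ n := by
      intro s hs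
      have hsT : |s| ≤ T := by
        have := abs_sub_left_of_mem_uIcc (uIoc_subset_uIcc hs)
        simp only [sub_zero] at this
        exact this.trans ht
      calc ‖B s (dysonTerm B y₀ n s)‖ ≤ ‖B s‖ * ‖dysonTerm B y₀ n s‖ := (B s).le_opNorm _
        _ ≤ K * (‖y₀‖ * ((K * |s|) ^ n / n.factorial)) := by
          gcongr
          · exact hK s hsT
          · exact ih s hsT
        _ = _ := by rw [sub_zero]; ring
    calc ‖dysonTerm B y₀ (n + 1) t‖
        ≤ ∫ s in Ι (0 : ℝ) t, ‖B s (dysonTerm B y₀ n s)‖ :=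
          intervalIntegral.norm_integral_le_integral_norm_uIoc
      _ ≤ ∫ s in Ι (0 : ℝ) t, ‖y₀‖ * K ^ (n + 1) / n.factorial * |s - 0| ^ n :=
          integral_mono_of_nonneg (.of_forall fun _ => norm_nonneg _)
            (intervalIntegrable_iff.mp (by apply Continuous.intervalIntegrable; fun_prop))
            ((ae_restrict_iff' measurableSet_uIoc).mpr (.of_forall integrand_le))
      _ = ‖y₀‖ * ((K * |t|) ^ (n + 1) / (n + 1).factorial) := by
          rw [integral_const_mul, integral_pow_abs_sub_uIoc, sub_zero, Nat.factorial_succ, mul_pow]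
          push_cast
          field_simp

lemma exists_norm_le_of_continuous {F : Type*} [SeminormedAddCommGroup F] {g : ℝ → F}
    (hg : Continuous g) (T : ℝ) : ∃ K, 0 ≤ K ∧ ∀ t, |t| ≤ T → ‖g t‖ ≤ K := by
  obtain ⟨K, hK⟩ := (isCompact_Icc (a := -T) (b := T)).exists_bound_of_continuousOn hg.continuousOn
  exact ⟨max K 0, le_max_right _ _, fun t ht => (hK t (abs_le.mp ht)).trans (le_max_left _ _)⟩

variable [CompleteSpace E]

lemma summable_dysonTerm (hB : Continuous B) (t : ℝ) : Summable fun n => dysonTerm B y₀ n t := by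
  obtain ⟨K, hK₀, hK⟩ := exists_norm_le_of_continuous hB |t|
  exact .of_norm_bounded ((Real.summable_pow_div_factorial _).mul_left _)
    fun n => norm_dysonTerm_le hK₀ hK n t le_rfl

lemma tsum_dysonTerm_eq_add (hB : Continuous B) (t : ℝ) :
    ∑' n, dysonTerm B y₀ n t = y₀ + ∑' n, dysonTerm B y₀ (n + 1) t :=
  (summable_dysonTerm hB t).tsum_eq_zero_add

lemma tsum_dysonTerm_zero (hB : Continuous B) : ∑' n, dysonTerm B y₀ n 0 = y₀ := by
  simp [tsum_dysonTerm_eq_add hB, dysonTerm_succ_zero]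

theorem hasDerivAt_tsum_dysonTerm (hB : Continuous B) (t : ℝ) :
    HasDerivAt (fun s => ∑' n, dysonTerm B y₀ n s) (B t (∑' n, dysonTerm B y₀ n t)) t := by
  obtain ⟨K, hK₀, hK⟩ := exists_norm_le_of_continuous hB (|t| + 1)
  have tail : HasDerivAt (fun s => ∑' n, dysonTerm B y₀ (n + 1) s)
      (∑' n, B t (dysonTerm B y₀ n t)) t := by
    refine hasDerivAt_tsum_of_isPreconnected (t := Metric.ball 0 (|t| + 1)) (y₀ := 0)
      (((Real.summable_pow_div_factorial (K * (|t| + 1))).mul_left ‖y₀‖).mul_left K)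
      Metric.isOpen_ball (convex_ball _ _).isPreconnected
      (fun n s _ => hasDerivAt_dysonTerm_succ hB n s) (fun n s hs => ?_)
      (Metric.mem_ball_self (by positivity))
      (by simpa only [dysonTerm_succ_zero] using summable_zero) (by simp)
    have hs' : |s| ≤ |t| + 1 := (mem_ball_zero_iff.mp hs).le
    calc ‖B s (dysonTerm B y₀ n s)‖ ≤ ‖B s‖ * ‖dysonTerm B y₀ n s‖ := (B s).le_opNorm _
      _ ≤ K * (‖y₀‖ * ((K * |s|) ^ n / n.factorial)) := by
        gcongr
        · exact hK s hs'
        · exact norm_dysonTerm_le hK₀ hK n s hs'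
      _ ≤ K * (‖y₀‖ * ((K * (|t| + 1)) ^ n / n.factorial)) := by gcongr
  rw [(B t).map_tsum (summable_dysonTerm hB t)]
  exact (tail.const_add y₀).congr_of_eventuallyEq (.of_forall (tsum_dysonTerm_eq_add hB))

end LinearODE

section FundamentalSolution

variable {𝔸 : Type*} [NormedRing 𝔸] [NormedAlgebra ℝ 𝔸] {B : ℝ → 𝔸}

lemma eq_one_of_hasDerivAt_commutator (hB : Continuous B) {P : ℝ → 𝔸}
    (hP : ∀ t, HasDerivAt P (P t * B t - B t * P t) t) (hP₀ : P 0 = 1) (t : ℝ) : P t = 1 := by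
  obtain ⟨K, hK₀, hK⟩ := exists_norm_le_of_continuous hB (|t| + 1)
  have lipschitz : ∀ s ∈ Ioo (-(|t| + 1)) (|t| + 1),
      LipschitzOnWith (2 * K.toNNReal) (fun p => p * B s - B s * p) univ := by
    refine fun s hs => (LipschitzWith.of_dist_le_mul fun p q => ?_).lipschitzOnWith
    have hBs : ‖B s‖ ≤ K := hK s (abs_le.mpr ⟨hs.1.le, hs.2.le⟩)
    calc dist (p * B s - B s * p) (q * B s - B s * q)
        = ‖(p - q) * B s - B s * (p - q)‖ := by rw [dist_eq_norm]; congr 1; noncomm_ring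
      _ ≤ ‖p - q‖ * ‖B s‖ + ‖B s‖ * ‖p - q‖ :=
        (norm_sub_le _ _).trans (add_le_add (norm_mul_le _ _) (norm_mul_le _ _))
      _ ≤ ‖p - q‖ * K + K * ‖p - q‖ := by gcongr
      _ = ↑(2 * K.toNNReal) * dist p q := by
        rw [dist_eq_norm]; push_cast; rw [Real.coe_toNNReal _ hK₀]; ring
  have one_solves (s : ℝ) : HasDerivAt (fun _ => (1 : 𝔸)) (1 * B s - B s * 1) s := by
    simpa using hasDerivAt_const s (1 : 𝔸)
  exact ODE_solution_unique_of_mem_Ioo lipschitz ⟨by linarith [abs_nonneg t], by positivity⟩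
    (fun s _ => ⟨hP s, mem_univ _⟩) (fun s _ => ⟨one_solves s, mem_univ _⟩) hP₀
    ⟨by linarith [neg_abs_le t], by linarith [le_abs_self t]⟩

lemma mul_eq_of_hasDerivAt_transport {W U : ℝ → 𝔸} (hW : ∀ t, HasDerivAt W (W t * B t) t)
    (hU : ∀ t, HasDerivAt U (-(B t * U t)) t) (t : ℝ) : W t * U t = W 0 * U 0 := by
  have deriv_mul (s : ℝ) : HasDerivAt (fun s => W s * U s) 0 s :=
    ((hW s).mul (hU s)).congr_deriv (by noncomm_ring)
  exact is_const_of_deriv_eq_zero (fun s => (deriv_mul s).differentiableAt)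
    (fun s => (deriv_mul s).deriv) t 0

theorem exists_units_hasDerivAt_transport [CompleteSpace 𝔸] (hB : Continuous B) :
    ∃ U : ℝ → 𝔸ˣ, U 0 = 1 ∧ ∀ t, HasDerivAt (fun s => (U s : 𝔸)) (-(B t * U t)) t := by
  let R := fun t => (ContinuousLinearMap.mul ℝ 𝔸).flip (B t)
  let L := fun t => -ContinuousLinearMap.mul ℝ 𝔸 (B t)
  have hR : Continuous R := by fun_prop
  have hL : Continuous L := by fun_prop
  set W : ℝ → 𝔸 := fun t => ∑' n, dysonTerm R 1 n t
  set U : ℝ → 𝔸 := fun t => ∑' n, dysonTerm L 1 n t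
  have hW : ∀ t, HasDerivAt W (W t * B t) t := hasDerivAt_tsum_dysonTerm hR
  have hU : ∀ t, HasDerivAt U (-(B t * U t)) t := hasDerivAt_tsum_dysonTerm hL
  have hW₀ : W 0 = 1 := tsum_dysonTerm_zero hR
  have hU₀ : U 0 = 1 := tsum_dysonTerm_zero hL
  have mul_WU (t : ℝ) : W t * U t = 1 := by
    rw [mul_eq_of_hasDerivAt_transport hW hU, hW₀, hU₀, one_mul]
  have mul_UW (t : ℝ) : U t * W t = 1 :=
    eq_one_of_hasDerivAt_commutator (P := fun t => U t * W t) hB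
      (fun s => ((hU s).mul (hW s)).congr_deriv (by noncomm_ring)) (by simp [hW₀, hU₀]) t
  exact ⟨fun t => ⟨U t, W t, mul_UW t, mul_WU t⟩, Units.ext hU₀, hU⟩

end FundamentalSolution

section AttenuatedIntegral

variable {𝔸 V : Type*} [NormedRing 𝔸] [NormedAlgebra ℝ 𝔸]
  [NormedAddCommGroup V] [NormedSpace ℝ V] [Module 𝔸 V]

/-- The attenuated line integral of `g` with attenuation `B` vanishes: `∫ U(t)⁻¹ g(t) dt = 0` for
every invertible solution `U` of the transport equation `U' + B U = 0` with `U 0 = 1`. -/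
def AttenuatedIntegralVanishes (B : ℝ → 𝔸) (g : ℝ → V) : Prop :=
  ∀ U : ℝ → 𝔸, (∀ t, HasDerivAt U (-(B t * U t)) t) → U 0 = 1 → (∀ t, IsUnit (U t)) →
    ∫ t, (U t)⁻¹ʳ • g t = 0

lemma integral_units_smul {X : Type*} [MeasurableSpace X] {μ : Measure X} [IsBoundedSMul 𝔸 V]
    [IsScalarTower ℝ 𝔸 V] (u : 𝔸ˣ) (g : X → V) :
    ∫ x, (u : 𝔸) • g x ∂μ = (u : 𝔸) • ∫ x, g x ∂μ :=
  (ContinuousLinearEquiv.smulLeft (R₁ := ℝ) u : V ≃L[ℝ] V).integral_comp_comm g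

theorem AttenuatedIntegralVanishes.integral_smul_comp_affine_eq_zero [CompleteSpace 𝔸]
    [IsBoundedSMul 𝔸 V] [IsScalarTower ℝ 𝔸 V] {B : ℝ → 𝔸} {g : ℝ → V}
    (h : AttenuatedIntegralVanishes B g) (hB : Continuous B) {τ κ : ℝ} {W : ℝ → 𝔸}
    (hW₀ : W 0 = 1) (hW : ∀ α, HasDerivAt W (W α * κ • B (τ + κ * α)) α) :
    ∫ α, W α • g (τ + κ * α) = 0 := by
  obtain ⟨U, hU₀, hU⟩ := exists_units_hasDerivAt_transport hB
  have vanishing : ∫ t, (U t)⁻¹.val • g t = 0 := by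
    simpa only [Ring.inverse_unit] using
      h (fun t => U t) hU (congrArg Units.val hU₀) (fun t => (U t).isUnit)
  have deriv_U_affine (α : ℝ) : HasDerivAt (fun α => (U (τ + κ * α)).val)
      (-(κ • B (τ + κ * α) * U (τ + κ * α))) α := by
    have affine : HasDerivAt (fun α => τ + κ * α) κ α := by
      simpa using ((hasDerivAt_id α).const_mul κ).const_add τ
    exact ((hU _).scomp α affine).congr_deriv (by simp only [smul_neg, smul_mul_assoc])
  have W_eq (α : ℝ) : W α = U τ * (U (τ + κ * α))⁻¹.val := by
    rw [Units.eq_mul_inv_iff_mul_eq, mul_eq_of_hasDerivAt_transport hW deriv_U_affine, hW₀]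
    simp
  calc ∫ α, W α • g (τ + κ * α)
      = (U τ).val • ∫ α, (U (τ + κ * α))⁻¹.val • g (τ + κ * α) := by
        simp only [W_eq, mul_smul, integral_units_smul]
    _ = (U τ).val • |κ⁻¹| • ∫ t, (U (τ + t))⁻¹.val • g (τ + t) := by
        rw [Measure.integral_comp_mul_left fun t => (U (τ + t))⁻¹.val • g (τ + t)]
    _ = 0 := by
        rw [integral_add_left_eq_self fun t => (U t)⁻¹.val • g t, vanishing, smul_zero, smul_zero]

end AttenuatedIntegral

section MajorizedSeries

/-- The monomial `α ^ k * a ^ i * q ^ j` with exponent `(k, i, j)` at `(α, a, q)`. -/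
def tripleMonomial (e : ℕ × ℕ × ℕ) (x : ℝ × ℝ × ℝ) : ℝ :=
  x.1 ^ e.1 * x.2.1 ^ e.2.1 * x.2.2 ^ e.2.2

@[fun_prop]
lemma continuous_tripleMonomial (e : ℕ × ℕ × ℕ) : Continuous (tripleMonomial e) := by
  unfold tripleMonomial; fun_prop

lemma tripleMonomial_add (e e' : ℕ × ℕ × ℕ) (x : ℝ × ℝ × ℝ) :
    tripleMonomial (e + e') x = tripleMonomial e x * tripleMonomial e' x := by
  simp only [tripleMonomial, Prod.fst_add, Prod.snd_add]; ring

lemma abs_tripleMonomial_le_one (e : ℕ × ℕ × ℕ) {x : ℝ × ℝ × ℝ} (hx : ‖x‖ ≤ 1) :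
    |tripleMonomial e x| ≤ 1 := by
  simp only [norm_prod_le_iff, Real.norm_eq_abs] at hx
  obtain ⟨h₁, h₂, h₃⟩ := hx
  simp only [tripleMonomial, abs_mul, abs_pow]
  exact mul_le_one₀ (mul_le_one₀ (pow_le_one₀ (abs_nonneg _) h₁) (by positivity)
    (pow_le_one₀ (abs_nonneg _) h₂)) (by positivity) (pow_le_one₀ (abs_nonneg _) h₃)

variable {E F : Type*} [NormedAddCommGroup E] [NormedSpace ℝ E]
  [NormedAddCommGroup F] [NormedSpace ℝ F]

lemma norm_tripleMonomial_smul_le (e : ℕ × ℕ × ℕ) {x : ℝ × ℝ × ℝ} (hx : ‖x‖ ≤ 1) (y : E) :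
    ‖tripleMonomial e x • y‖ ≤ 2 ^ e.1 * ‖y‖ := by
  rw [norm_smul]
  gcongr
  exact (abs_tripleMonomial_le_one e hx).trans (one_le_pow₀ one_le_two)

lemma summable_norm_tripleMonomial_smul {ι : Type*} {c : ι → E} {e : ι → ℕ × ℕ × ℕ}
    (hs : Summable fun ν => 2 ^ (e ν).1 * ‖c ν‖) {x : ℝ × ℝ × ℝ} (hx : ‖x‖ ≤ 1) :
    Summable fun ν => ‖tripleMonomial (e ν) x • c ν‖ :=
  hs.of_nonneg_of_le (fun _ => norm_nonneg _) fun _ => norm_tripleMonomial_smul_le _ hx _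

/-- `HasMajorizedSeries φ C` says that, on the unit polydisc, `φ (α, a, q)` is the sum of a power
series `∑ ν, α ^ k_ν * a ^ i_ν * q ^ j_ν • c ν` with `∑ ν, 2 ^ k_ν * ‖c ν‖ ≤ C`. Several indices may
share an exponent, so that sums and products of series need no regrouping; the weight `2 ^ k_ν` is
matched to the growth of moments in `α` that the series are later paired with. -/
def HasMajorizedSeries (φ : ℝ × ℝ × ℝ → E) (C : ℝ) : Prop :=
  ∃ (ι : Type) (_ : Countable ι) (c : ι → E) (e : ι → ℕ × ℕ × ℕ),
    Summable (fun ν => 2 ^ (e ν).1 * ‖c ν‖) ∧ ∑' ν, 2 ^ (e ν).1 * ‖c ν‖ ≤ C ∧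
    ∀ x, ‖x‖ ≤ 1 → HasSum (fun ν => tripleMonomial (e ν) x • c ν) (φ x)

namespace HasMajorizedSeries

variable {φ : ℝ × ℝ × ℝ → E} {C D : ℝ}

lemma nonneg (h : HasMajorizedSeries φ C) : 0 ≤ C := by
  obtain ⟨ι, _, c, e, _, hC, _⟩ := h
  exact (tsum_nonneg fun ν => by positivity).trans hC

lemma mono (h : HasMajorizedSeries φ C) (hCD : C ≤ D) : HasMajorizedSeries φ D := by
  obtain ⟨ι, hι, c, e, hs, hC, hsum⟩ := h
  exact ⟨ι, hι, c, e, hs, hC.trans hCD, hsum⟩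

lemma of_majorant {ι : Type} [Countable ι] {c : ι → E} {e : ι → ℕ × ℕ × ℕ} {b : ι → ℝ}
    (hcb : ∀ ν, 2 ^ (e ν).1 * ‖c ν‖ ≤ b ν) (hb : Summable b) (hbC : ∑' ν, b ν ≤ C)
    (hsum : ∀ x, ‖x‖ ≤ 1 → HasSum (fun ν => tripleMonomial (e ν) x • c ν) (φ x)) :
    HasMajorizedSeries φ C := by
  have hs : Summable fun ν => 2 ^ (e ν).1 * ‖c ν‖ := hb.of_nonneg_of_le (fun ν => by positivity) hcb
  exact ⟨ι, inferInstance, c, e, hs, (hs.tsum_le_tsum hcb hb).trans hbC, hsum⟩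

lemma const (y : E) : HasMajorizedSeries (fun _ => y) ‖y‖ :=
  of_majorant (ι := Unit) (c := fun _ => y) (e := fun _ => 0) (b := fun _ => ‖y‖) (by simp)
    (hasSum_fintype _).summable (by simp)
    fun x _ => by simp [tripleMonomial]

lemma clm_comp (h : HasMajorizedSeries φ C) (T : E →L[ℝ] F) :
    HasMajorizedSeries (fun x => T (φ x)) (‖T‖ * C) := by
  obtain ⟨ι, hι, c, e, hs, hC, hsum⟩ := h
  refine of_majorant (c := fun ν => T (c ν)) (e := e) (fun ν => ?_) (hs.mul_left ‖T‖) ?_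
    fun x hx => by simpa only [map_smul] using T.hasSum (hsum x hx)
  · calc 2 ^ (e ν).1 * ‖T (c ν)‖ ≤ 2 ^ (e ν).1 * (‖T‖ * ‖c ν‖) := by gcongr; exact T.le_opNorm _
      _ = ‖T‖ * (2 ^ (e ν).1 * ‖c ν‖) := by ring
  · rw [tsum_mul_left]; gcongr

lemma const_smul (h : HasMajorizedSeries φ C) (r : ℝ) :
    HasMajorizedSeries (fun x => r • φ x) (|r| * C) :=
  (h.clm_comp (r • ContinuousLinearMap.id ℝ E)).mono <| by
    have := h.nonneg
    rw [norm_smul, Real.norm_eq_abs]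
    gcongr
    exact mul_le_of_le_one_right (abs_nonneg r) ContinuousLinearMap.norm_id_le

lemma continuousOn [CompleteSpace E] (h : HasMajorizedSeries φ C) :
    ContinuousOn φ (Metric.closedBall 0 1) := by
  obtain ⟨ι, _, c, e, hs, _, hsum⟩ := h
  have : ContinuousOn (fun x => ∑' ν, tripleMonomial (e ν) x • c ν) (Metric.closedBall 0 1) :=
    continuousOn_tsum (fun ν => by fun_prop) hs
      fun ν x hx => norm_tripleMonomial_smul_le _ (mem_closedBall_zero_iff.mp hx) _
  exact this.congr fun x hx => (hsum x (mem_closedBall_zero_iff.mp hx)).tsum_eq.symm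

end HasMajorizedSeries

lemma hasSum_clm_apply_of_summable_norm [CompleteSpace F] {ι κ : Type*} {f : ι → E →L[ℝ] F}
    {g : κ → E} {T : E →L[ℝ] F} {y : E} (hf : HasSum f T) (hg : HasSum g y)
    (hf' : Summable fun i => ‖f i‖) (hg' : Summable fun k => ‖g k‖) :
    HasSum (fun p : ι × κ => f p.1 (g p.2)) (T y) := by
  have summable_prod : Summable fun p : ι × κ => f p.1 (g p.2) :=
    .of_norm_bounded (hf'.mul_of_nonneg hg' (fun _ => norm_nonneg _) fun _ => norm_nonneg _)
      fun p => (f p.1).le_opNorm _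
  have iterated := summable_prod.hasSum.prod_fiberwise fun i => (f i).hasSum hg
  exact iterated.unique (hf.mapL (ContinuousLinearMap.apply ℝ F y)) ▸ summable_prod.hasSum

namespace HasMajorizedSeries

variable {φ : ℝ × ℝ × ℝ → E} {C D : ℝ}

lemma clm_apply [CompleteSpace F] {B : ℝ × ℝ × ℝ → E →L[ℝ] F} (hB : HasMajorizedSeries B C)
    (hφ : HasMajorizedSeries φ D) : HasMajorizedSeries (fun x => B x (φ x)) (C * D) := by
  have hC := hB.nonneg
  obtain ⟨ι, hι, c, e, hs, hle, hsum⟩ := hB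
  obtain ⟨ι', hι', c', e', hs', hle', hsum'⟩ := hφ
  have hprod := hs.mul_of_nonneg hs' (fun _ => by positivity) (fun _ => by positivity)
  refine of_majorant (c := fun p : ι × ι' => c p.1 (c' p.2)) (e := fun p => e p.1 + e' p.2)
    (fun p => ?_) hprod ?_ fun x hx => ?_
  · calc 2 ^ (e p.1 + e' p.2).1 * ‖c p.1 (c' p.2)‖
        ≤ 2 ^ (e p.1 + e' p.2).1 * (‖c p.1‖ * ‖c' p.2‖) := by gcongr; exact (c p.1).le_opNorm _
      _ = _ := by rw [Prod.fst_add, pow_add]; ring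
  · rw [← hs.tsum_mul_tsum hs' hprod]
    exact mul_le_mul hle hle' (tsum_nonneg fun _ => by positivity) hC
  · convert hasSum_clm_apply_of_summable_norm (hsum x hx) (hsum' x hx)
      (summable_norm_tripleMonomial_smul hs hx) (summable_norm_tripleMonomial_smul hs' hx) using 2
      with p
    rw [tripleMonomial_add, _root_.smul_apply, map_smul, smul_smul]

lemma integral_fst [CompleteSpace E] (hφ : HasMajorizedSeries φ C) :
    HasMajorizedSeries (fun x => ∫ s in (0 : ℝ)..x.1, φ (s, x.2)) (2 * C) := by
  obtain ⟨ι, hι, c, e, hs, hle, hsum⟩ := hφ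
  refine of_majorant (c := fun ν => ((e ν).1 + 1 : ℝ)⁻¹ • c ν) (e := fun ν => e ν + (1, 0, 0))
    (fun ν => ?_) (hs.mul_left 2) (by rw [tsum_mul_left]; gcongr) fun x hx => ?_
  · calc 2 ^ (e ν + (1, 0, 0)).1 * ‖((e ν).1 + 1 : ℝ)⁻¹ • c ν‖
        ≤ 2 ^ (e ν + (1, 0, 0)).1 * (1 * ‖c ν‖) := by
          rw [norm_smul, Real.norm_of_nonneg (by positivity)]
          gcongr
          exact inv_le_one_of_one_le₀ (by simp)
      _ = _ := by rw [Prod.fst_add, pow_succ]; ring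
  · have hs_mem : ∀ s ∈ Ι (0 : ℝ) x.1, ‖(s, x.2)‖ ≤ 1 := by
      intro s hsx
      have h_abs := abs_sub_left_of_mem_uIcc (uIoc_subset_uIcc hsx)
      simp only [sub_zero] at h_abs
      rw [norm_prod_le_iff] at hx ⊢
      exact ⟨h_abs.trans hx.1, hx.2⟩
    have integrated := intervalIntegral.hasSum_integral_of_dominated_convergence
      (F := fun ν s => tripleMonomial (e ν) (s, x.2) • c ν) (μ := volume)
      (fun ν _ => 2 ^ (e ν).1 * ‖c ν‖)
      (fun ν => Continuous.aestronglyMeasurable (by fun_prop))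
      (fun ν => .of_forall fun s hsx => norm_tripleMonomial_smul_le _ (hs_mem s hsx) _)
      (.of_forall fun _ _ => hs) (by simp)
      (.of_forall fun s hsx => hsum (s, x.2) (hs_mem s hsx))
    convert integrated using 2 with ν
    rw [intervalIntegral.integral_smul_const, smul_smul]
    simp only [tripleMonomial, intervalIntegral.integral_mul_const, integral_pow, Prod.fst_add,
      Prod.snd_add, add_zero, zero_pow (Nat.succ_ne_zero _), sub_zero]
    congr 1
    ring

protected lemma tsum [CompleteSpace E] {φ : ℕ → ℝ × ℝ × ℝ → E} {ψ : ℝ × ℝ × ℝ → E} {C : ℕ → ℝ}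
    (hφ : ∀ n, HasMajorizedSeries (φ n) (C n)) (hC : Summable C)
    (hψ : ∀ x, ‖x‖ ≤ 1 → HasSum (fun n => φ n x) (ψ x)) :
    HasMajorizedSeries ψ (∑' n, C n) := by
  choose ι hι c e hs hle hsum using hφ
  have summable_rows : Summable fun n => ∑' ν, 2 ^ (e n ν).1 * ‖c n ν‖ :=
    hC.of_nonneg_of_le (fun n => tsum_nonneg fun _ => by positivity) hle
  have summable_all : Summable fun p : (n : ℕ) × ι n => 2 ^ (e p.1 p.2).1 * ‖c p.1 p.2‖ :=
    (summable_sigma_of_nonneg fun p => by positivity).mpr ⟨hs, summable_rows⟩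
  refine of_majorant (c := fun p : (n : ℕ) × ι n => c p.1 p.2) (e := fun p => e p.1 p.2)
    (fun p => le_rfl) summable_all ?_ fun x hx => ?_
  · rw [summable_all.tsum_sigma' hs]
    exact summable_rows.tsum_le_tsum hle hC
  · have total : Summable fun p : (n : ℕ) × ι n => tripleMonomial (e p.1 p.2) x • c p.1 p.2 :=
      (summable_norm_tripleMonomial_smul summable_all hx).of_norm
    exact (total.hasSum.sigma fun n => hsum n x hx).unique (hψ x hx) ▸ total.hasSum

variable [CompleteSpace E] {B : ℝ × ℝ × ℝ → E →L[ℝ] E}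

protected lemma dysonTerm (hB : HasMajorizedSeries B C) (y₀ : E) : ∀ n, HasMajorizedSeries
    (fun x => dysonTerm (fun s => B (s, x.2)) y₀ n x.1) ((2 * C) ^ n * ‖y₀‖)
  | 0 => (const y₀).mono (by simp)
  | n + 1 => (hB.clm_apply (hB.dysonTerm y₀ n)).integral_fst.mono (le_of_eq (by ring))

theorem tsum_dysonTerm_sub (hB : HasMajorizedSeries B C) (hC : C ≤ 1 / 4)
    (hB_cont : ∀ y, Continuous fun s => B (s, y)) (y₀ : E) :
    HasMajorizedSeries (fun x => ∑' n, dysonTerm (fun s => B (s, x.2)) y₀ n x.1 - y₀)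
      (4 * C * ‖y₀‖) := by
  have hC₀ := hB.nonneg
  have geometric := summable_geometric_of_lt_one (r := 2 * C) (by linarith) (by linarith)
  refine (HasMajorizedSeries.tsum (fun n => hB.dysonTerm y₀ (n + 1))
    (((summable_nat_add_iff 1).mpr geometric).mul_right _) fun x _ => ?_).mono ?_
  · rw [tsum_dysonTerm_eq_add (hB_cont x.2), add_sub_cancel_left]
    exact ((summable_nat_add_iff 1).mpr (summable_dysonTerm (hB_cont x.2) x.1)).hasSum
  · have inv_le : (1 - 2 * C)⁻¹ ≤ 2 := by
      rw [inv_le_comm₀ (by linarith) two_pos]; linarith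
    rw [tsum_mul_right]
    gcongr
    calc ∑' n, (2 * C) ^ (n + 1) = 2 * C * (1 - 2 * C)⁻¹ := by
          simp_rw [pow_succ']
          rw [tsum_mul_left, tsum_geometric_of_lt_one (by linarith) (by linarith)]
      _ ≤ 2 * C * 2 := by gcongr
      _ = 4 * C := by ring

end HasMajorizedSeries

section AnalyticGerm

variable {X : Type*} [NormedAddCommGroup X] [NormedSpace ℝ X]

/-- The exponent of the monomial `∏ m, ![1, α, a, q] (w m)` spelled by the word `w`. -/
def wordExponent {n : ℕ} (w : Fin n → Fin 4) : ℕ × ℕ × ℕ :=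
  (Finset.card {m | w m = 1}, Finset.card {m | w m = 2}, Finset.card {m | w m = 3})

lemma prod_word_eq_tripleMonomial {n : ℕ} (w : Fin n → Fin 4) (x : ℝ × ℝ × ℝ) :
    ∏ m, ![1, x.1, x.2.1, x.2.2] (w m) = tripleMonomial (wordExponent w) x := by
  refine (Finset.prod_fiberwise' Finset.univ w _).symm.trans ?_
  simp [Fin.prod_univ_four, wordExponent, tripleMonomial]

lemma map_sum_smul_eq_sum_words {κ : Type*} [Fintype κ] {n : ℕ} (p : X [×n]→L[ℝ] E)
    (g : κ → ℝ) (u : κ → X) :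
    p (fun _ => ∑ d, g d • u d) = ∑ w : Fin n → κ, (∏ m, g (w m)) • p fun m => u (w m) := by
  classical
  rw [p.map_sum]
  exact Finset.sum_congr rfl fun w _ => p.map_smul_univ _ _

lemma hasMajorizedSeries_multilinear_affine {n : ℕ} (p : X [×n]→L[ℝ] E) {u : Fin 4 → X} {ρ : ℝ}
    (hu : ∀ d, ‖u d‖ ≤ ρ) :
    HasMajorizedSeries (fun x => p fun _ => ∑ d, ![1, x.1, x.2.1, x.2.2] d • u d)
      (‖p‖ * (8 * ρ) ^ n) := by
  refine .of_majorant (c := fun w : Fin n → Fin 4 => p fun m => u (w m)) (e := wordExponent)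
    (b := fun _ => ‖p‖ * (2 * ρ) ^ n) (fun w => ?_) (hasSum_fintype _).summable ?_ fun x _ => ?_
  · have coeff_le : ‖p fun m => u (w m)‖ ≤ ‖p‖ * ρ ^ n := by
      simpa using p.le_opNorm_mul_prod_of_le fun m => hu (w m)
    have card_le : (wordExponent w).1 ≤ n := by
      simpa only [wordExponent, Fintype.card_fin] using
        Finset.card_le_univ (Finset.univ.filter fun m => w m = 1)
    calc 2 ^ (wordExponent w).1 * ‖p fun m => u (w m)‖ ≤ 2 ^ n * (‖p‖ * ρ ^ n) := by
          gcongr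
          exact one_le_two
      _ = ‖p‖ * (2 * ρ) ^ n := by ring
  · rw [tsum_fintype, Finset.sum_const, Finset.card_univ, Fintype.card_fun, Fintype.card_fin,
      Fintype.card_fin, nsmul_eq_mul]
    push_cast
    rw [mul_left_comm, ← mul_pow, ← mul_assoc]
    norm_num
  · simp only [map_sum_smul_eq_sum_words, prod_word_eq_tripleMonomial]
    exact hasSum_fintype _

theorem hasMajorizedSeries_comp_affine [CompleteSpace E] {G : X → E}
    {p : FormalMultilinearSeries ℝ X E} {R : ENNReal} (hG : HasFPowerSeriesOnBall G p 0 R)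
    {ρ : NNReal} (hρ : ((8 * ρ : NNReal) : ENNReal) < R) {u : Fin 4 → X} (hu : ∀ d, ‖u d‖ ≤ ρ) :
    HasMajorizedSeries (fun x => G (∑ d, ![1, x.1, x.2.1, x.2.2] d • u d))
      (∑' n, ‖p n‖ * (8 * ρ : ℝ) ^ n) := by
  have summable_majorant : Summable fun n => ‖p n‖ * (8 * ρ : ℝ) ^ n := by
    simpa using p.summable_norm_mul_pow (hρ.trans_le hG.r_le)
  refine .tsum (fun n => hasMajorizedSeries_multilinear_affine (p n) hu) summable_majorant
    fun x hx => ?_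
  set y := ∑ d, ![1, x.1, x.2.1, x.2.2] d • u d
  have norm_y_le : ‖y‖ ≤ 8 * ρ := by
    have coord_le : ∀ d, ‖(![1, x.1, x.2.1, x.2.2] : Fin 4 → ℝ) d‖ ≤ 1 := by
      simpa [Fin.forall_fin_succ, norm_prod_le_iff] using hx
    calc ‖y‖ ≤ ∑ _ : Fin 4, 1 * (ρ : ℝ) := norm_sum_le_of_le _ fun d _ => by
          rw [norm_smul]; gcongr; exacts [coord_le d, hu d]
      _ ≤ 8 * ρ := by simp; linarith [ρ.2]
  have hy : y ∈ Metric.eball (0 : X) R := by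
    rw [mem_eball_zero_iff, ← ofReal_norm]
    refine lt_of_le_of_lt ?_ hρ
    exact (ENNReal.ofReal_le_ofReal norm_y_le).trans_eq (by simp)
  simpa using hG.hasSum hy

end AnalyticGerm

end MajorizedSeries

section ParabolicIntegrationByParts

variable {V : Type*} [NormedAddCommGroup V] [NormedSpace ℝ V]

lemma intervalIntegral_intervalIntegral_swap_of_continuous {h : ℝ → ℝ → V}
    (hh : Continuous (Function.uncurry h)) (a b c d : ℝ) :
    ∫ x in a..b, ∫ y in c..d, h x y = ∫ y in c..d, ∫ x in a..b, h x y :=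
  intervalIntegral_intervalIntegral_swap <|
    (hh.continuousOn.integrableOn_compact (isCompact_uIcc.prod isCompact_uIcc)).mono_set
      (prod_mono uIoc_subset_uIcc uIoc_subset_uIcc)

variable [CompleteSpace V] {g G : ℝ → V}

lemma integral_pow_smul_comp_parabola (hg : Continuous g) (hG : ∀ t, HasDerivAt G (g t) t)
    {l r α q : ℝ} (hl : G (q + (l - α) ^ 2) = 0) (hr : G (q + (r - α) ^ 2) = 0) (i : ℕ) :
    ∫ a in l..r, (a ^ i * (a - α)) • g (q + (a - α) ^ 2) =
      -(i / 2 : ℝ) • ∫ a in l..r, a ^ (i - 1) • G (q + (a - α) ^ 2) := by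
  have deriv_G (a : ℝ) : HasDerivAt (fun a => G (q + (a - α) ^ 2))
      ((2 * (a - α)) • g (q + (a - α) ^ 2)) a := by
    refine (hG _).scomp a ?_
    simpa using (((hasDerivAt_id a).sub_const α).pow 2).const_add q
  have by_parts := intervalIntegral.integral_smul_deriv_eq_deriv_smul (a := l) (b := r)
    (fun a _ => (hasDerivAt_pow i a).div_const 2)
    (fun a _ => deriv_G a) (Continuous.intervalIntegrable (by fun_prop) _ _)
    (Continuous.intervalIntegrable (by fun_prop) _ _)
  rw [hl, hr, smul_zero, smul_zero, sub_zero, zero_sub] at by_parts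
  rw [neg_smul, ← intervalIntegral.integral_smul]
  calc ∫ a in l..r, (a ^ i * (a - α)) • g (q + (a - α) ^ 2)
      = ∫ a in l..r, (a ^ i / 2) • (2 * (a - α)) • g (q + (a - α) ^ 2) := by
        simp only [smul_smul]
        congr! 3
        ring
    _ = -∫ a in l..r, (i / 2 : ℝ) • a ^ (i - 1) • G (q + (a - α) ^ 2) := by
        rw [by_parts]
        simp only [smul_smul, mul_div_right_comm]

lemma integral_pow_succ_smul_comp_add (hg : Continuous g) (hG : ∀ t, HasDerivAt G (g t) t)
    {b s : ℝ} (hb : G (b + s) = 0) (j : ℕ) :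
    ∫ q in (0 : ℝ)..b, q ^ (j + 1) • g (q + s) =
      -(j + 1 : ℝ) • ∫ q in (0 : ℝ)..b, q ^ j • G (q + s) := by
  rw [intervalIntegral.integral_smul_deriv_eq_deriv_smul (fun q _ => hasDerivAt_pow (j + 1) q)
    (fun q _ => (hG _).comp_add_const q s) (Continuous.intervalIntegrable (by fun_prop) _ _)
    (Continuous.intervalIntegrable (by fun_prop) _ _), hb]
  simp only [mul_smul, intervalIntegral.integral_smul, Nat.add_sub_cancel, Nat.cast_add,
    Nat.cast_one, smul_zero, ne_eq, Nat.succ_ne_zero, not_false_eq_true, zero_pow, zero_smul,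
    sub_zero, zero_sub, neg_smul]

/-- Integrating by parts in `a` on the left and in `q` on the right turns both sides into
`-(i * (j + 1)) ∫∫ a ^ (i - 1) * q ^ j * G (q + (a - α) ^ 2)` with `G' = g`. -/
theorem integral_monomial_smul_comp_parabola (hg : Continuous g) {ω l r b α : ℝ}
    (hgω : ∀ t, ω ≤ t → g t = 0) (hl : ω ≤ (l - α) ^ 2) (hr : ω ≤ (r - α) ^ 2) (hb₀ : 0 ≤ b)
    (hb : ω ≤ b) (i j : ℕ) :
    (2 * (j + 1) : ℝ) •
        ∫ q in (0 : ℝ)..b, ∫ a in l..r, (a ^ i * (a - α) * q ^ j) • g (q + (a - α) ^ 2) =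
      (i : ℝ) • ∫ q in (0 : ℝ)..b, ∫ a in l..r,
        (a ^ (i - 1) * q ^ (j + 1)) • g (q + (a - α) ^ 2) := by
  set G : ℝ → V := fun t => ∫ s in ω..t, g s
  have hG (t : ℝ) : HasDerivAt G (g t) t := (hg.integral_hasStrictDerivAt ω t).hasDerivAt
  have hG_cont : Continuous G := continuous_iff_continuousAt.mpr fun t => (hG t).continuousAt
  have hGω {t : ℝ} (ht : ω ≤ t) : G t = 0 :=
    intervalIntegral.integral_zero_ae (.of_forall fun s hs => hgω s (uIoc_of_le ht ▸ hs).1.le)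
  set I := ∫ q in (0 : ℝ)..b, ∫ a in l..r, (q ^ j * a ^ (i - 1)) • G (q + (a - α) ^ 2)
  have by_parts_a : ∫ q in (0 : ℝ)..b, ∫ a in l..r,
      (a ^ i * (a - α) * q ^ j) • g (q + (a - α) ^ 2) = -(i / 2 : ℝ) • I := by
    rw [← intervalIntegral.integral_smul]
    refine intervalIntegral.integral_congr fun q hq => ?_
    have hq₀ : 0 ≤ q := (uIcc_of_le hb₀ ▸ hq).1
    simp only [mul_comm _ (q ^ j), mul_smul (q ^ j), intervalIntegral.integral_smul]
    rw [integral_pow_smul_comp_parabola hg hG (hGω (by linarith)) (hGω (by linarith)),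
      smul_comm]
  have by_parts_q : ∫ q in (0 : ℝ)..b, ∫ a in l..r,
      (a ^ (i - 1) * q ^ (j + 1)) • g (q + (a - α) ^ 2) = -(j + 1 : ℝ) • I := by
    rw [show I = _ from intervalIntegral_intervalIntegral_swap_of_continuous (by fun_prop) _ _ _ _,
      intervalIntegral_intervalIntegral_swap_of_continuous (by fun_prop),
      ← intervalIntegral.integral_smul]
    refine intervalIntegral.integral_congr fun a _ => ?_
    simp only [mul_comm _ (a ^ (i - 1)), mul_smul (a ^ (i - 1)), intervalIntegral.integral_smul]
    rw [integral_pow_succ_smul_comp_add hg hG (hGω (by nlinarith [sq_nonneg (a - α)])), smul_comm]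
  rw [by_parts_a, by_parts_q, smul_smul, smul_smul]
  congr 1
  ring

end ParabolicIntegrationByParts

section MomentProblem

variable {X : Type*} [TopologicalSpace X] [T2Space X] [MeasurableSpace X] [BorelSpace X]
  {μ : Measure X} [IsFiniteMeasureOnCompacts μ] [μ.IsOpenPosMeasure] {K : Set X}
  {𝒜 : Subalgebra ℝ C(X, ℝ)}

lemma eqOn_zero_of_setIntegral_mul_eq_zero (hK : IsCompact K) (hK' : K ⊆ closure (interior K))
    (h𝒜 : 𝒜.SeparatesPoints) (h : C(X, ℝ)) (h_orth : ∀ g ∈ 𝒜, ∫ x in K, g x * h x ∂μ = 0) :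
    EqOn h 0 K := by
  have integrableOn {g : X → ℝ} (hg : Continuous g) : IntegrableOn g K μ :=
    hg.continuousOn.integrableOn_compact hK
  have integral_sq_le {ε : ℝ} (hε : 0 < ε) :
      ∫ x in K, h x * h x ∂μ ≤ ε * ∫ x in K, |h x| ∂μ := by
    obtain ⟨g, hg, h_near⟩ :=
      ContinuousMap.exists_mem_subalgebra_near_continuous_of_isCompact_of_separatesPoints
        h𝒜 h hK hε
    calc ∫ x in K, h x * h x ∂μ = ∫ x in K, h x * h x - g x * h x ∂μ := by
          rw [integral_sub (integrableOn (by fun_prop)) (integrableOn (by fun_prop)),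
            h_orth g hg, sub_zero]
      _ ≤ ∫ x in K, ε * |h x| ∂μ := by
          refine setIntegral_mono_on (integrableOn (by fun_prop)) (integrableOn (by fun_prop))
            hK.measurableSet fun x hx => ?_
          rw [← sub_mul]
          refine (le_abs_self _).trans ?_
          rw [abs_mul, abs_sub_comm]
          gcongr
          exact (h_near x hx).le
      _ = ε * ∫ x in K, |h x| ∂μ := integral_const_mul _ _
  have integral_sq_eq_zero : ∫ x in K, h x * h x ∂μ = 0 := by
    have bound_tendsto : Tendsto (fun ε => ε * ∫ x in K, |h x| ∂μ) (𝓝[>] 0) (𝓝 0) :=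
      tendsto_nhdsWithin_of_tendsto_nhds (Continuous.tendsto' (by fun_prop) _ _ (zero_mul _))
    exact le_antisymm (ge_of_tendsto bound_tendsto (eventually_mem_nhdsWithin.mono
      fun ε hε => integral_sq_le hε)) (integral_nonneg fun x => mul_self_nonneg _)
  have sq_ae_eq_zero := (integral_eq_zero_iff_of_nonneg (fun x => mul_self_nonneg (h x))
    (integrableOn (by fun_prop))).mp integral_sq_eq_zero
  exact Measure.eqOn_of_ae_eq (sq_ae_eq_zero.mono fun x hx => mul_self_eq_zero.mp hx)
    h.continuous.continuousOn continuousOn_const hK'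

variable {V : Type*} [NormedAddCommGroup V] [NormedSpace ℝ V] [CompleteSpace V]

theorem eqOn_zero_of_setIntegral_smul_eq_zero (hK : IsCompact K) (hK' : K ⊆ closure (interior K))
    (h𝒜 : 𝒜.SeparatesPoints) {h : X → V} (hh : Continuous h)
    (h_orth : ∀ g ∈ 𝒜, ∫ x in K, g x • h x ∂μ = 0) : EqOn h 0 K := by
  intro x hx
  refine (SeparatingDual.eq_zero_iff_forall_dual_eq_zero (R := ℝ) _).mpr fun ℓ => ?_
  refine eqOn_zero_of_setIntegral_mul_eq_zero (μ := μ) hK hK' h𝒜 ⟨fun x => ℓ (h x), by fun_prop⟩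
    (fun g hg => ?_) hx
  have integrable_smul : IntegrableOn (fun x => g x • h x) K μ :=
    (by fun_prop : Continuous fun x => g x • h x).continuousOn.integrableOn_compact hK
  simpa [h_orth g hg] using ℓ.integral_comp_comm integrable_smul

/-- `tripleMonomial e` as an element of the algebra of continuous functions. -/
def tripleMonomialMap (e : ℕ × ℕ × ℕ) : C(ℝ × ℝ × ℝ, ℝ) :=
  ⟨tripleMonomial e, continuous_tripleMonomial e⟩

lemma toSubmodule_adjoin_tripleMonomialMap :
    Subalgebra.toSubmodule (Algebra.adjoin ℝ (range tripleMonomialMap)) =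
      Submodule.span ℝ (range tripleMonomialMap) := by
  refine Algebra.adjoin_eq_span_of_subset _ (Subset.trans (fun g hg => ?_) Submodule.subset_span)
  refine Submonoid.closure_induction (fun _ => id) ⟨0, ?_⟩ ?_ hg
  · ext x
    simp [tripleMonomialMap, tripleMonomial]
  · rintro - - - - ⟨e, rfl⟩ ⟨e', rfl⟩
    exact ⟨e + e', ContinuousMap.ext (tripleMonomial_add e e')⟩

lemma separatesPoints_adjoin_tripleMonomialMap :
    (Algebra.adjoin ℝ (range tripleMonomialMap)).SeparatesPoints := by
  intro x y hxy
  have exists_ne : ∃ e, tripleMonomial e x ≠ tripleMonomial e y := by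
    by_contra! h
    refine hxy (Prod.ext ?_ (Prod.ext ?_ ?_))
    · simpa [tripleMonomial] using h (1, 0, 0)
    · simpa [tripleMonomial] using h (0, 1, 0)
    · simpa [tripleMonomial] using h (0, 0, 1)
  obtain ⟨e, he⟩ := exists_ne
  exact ⟨_, ⟨_, Algebra.subset_adjoin ⟨e, rfl⟩, rfl⟩, he⟩

theorem eqOn_zero_of_setIntegral_tripleMonomial_smul_eq_zero {K : Set (ℝ × ℝ × ℝ)}
    (hK : IsCompact K) (hK' : K ⊆ closure (interior K)) {h : ℝ × ℝ × ℝ → V} (hh : Continuous h)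
    (h_moments : ∀ e, ∫ x in K, tripleMonomial e x • h x = 0) : EqOn h 0 K := by
  refine eqOn_zero_of_setIntegral_smul_eq_zero (μ := volume) hK hK'
    separatesPoints_adjoin_tripleMonomialMap hh fun g hg => ?_
  have integrable (g : C(ℝ × ℝ × ℝ, ℝ)) : IntegrableOn (fun x => g x • h x) K :=
    (by fun_prop : Continuous fun x => g x • h x).continuousOn.integrableOn_compact hK
  rw [← Subalgebra.mem_toSubmodule, toSubmodule_adjoin_tripleMonomialMap] at hg
  induction hg using Submodule.span_induction with
  | mem g hg => obtain ⟨e, rfl⟩ := hg; exact h_moments e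
  | zero => simp
  | add g₁ g₂ _ _ ih₁ ih₂ =>
    simp only [ContinuousMap.add_apply, add_smul]
    rw [integral_add (integrable g₁) (integrable g₂), ih₁, ih₂, add_zero]
  | smul r g _ ih =>
    simp only [ContinuousMap.smul_apply, smul_assoc]
    rw [integral_smul, ih, smul_zero]

end MomentProblem

section MomentDecay

/-- The weight `1 / (i + j).choose i` on moments of order `(i, j)`. It is nonincreasing in `i` and
`j`, and `i / (j + 1)` times the weight at `(i - 1, j + 1)` is at most the weight at `(i, j)`, which
is what the moment recursion of `norm_moment_le` demands. -/
noncomputable def chooseWeight (i j : ℕ) : ℝ := ((i + j).choose i : ℝ)⁻¹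

lemma chooseWeight_pos (i j : ℕ) : 0 < chooseWeight i j :=
  inv_pos.mpr (Nat.cast_pos.mpr (Nat.choose_pos (Nat.le_add_right i j)))

lemma chooseWeight_add_le (i j i' j' : ℕ) : chooseWeight (i + i') (j + j') ≤ chooseWeight i j := by
  refine inv_anti₀ (Nat.cast_pos.mpr (Nat.choose_pos (Nat.le_add_right i j))) (Nat.cast_le.mpr ?_)
  calc (i + j).choose i ≤ (i + (j + j')).choose i := Nat.choose_le_choose _ (by lia)
    _ ≤ (i + i' + (j + j')).choose (i + i') := by
      rw [Nat.choose_symm_add, Nat.choose_symm_add]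
      exact Nat.choose_le_choose _ (by lia)

lemma div_mul_chooseWeight_le (i j : ℕ) :
    (i / (j + 1) : ℝ) * chooseWeight (i - 1) (j + 1) ≤ chooseWeight i j := by
  rcases i with _ | i
  · simpa using (chooseWeight_pos 0 j).le
  · have choose_succ :
        ((i + 1 + j).choose (i + 1) : ℝ) * (i + 1) = (i + 1 + j).choose i * (j + 1) := by
      have := Nat.choose_succ_right_eq (i + 1 + j) i
      rw [show i + 1 + j - i = j + 1 by lia] at this
      exact_mod_cast this
    have pos : (0 : ℝ) < (i + 1 + j).choose i := Nat.cast_pos.mpr (Nat.choose_pos (by lia))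
    have pos' : (0 : ℝ) < (i + 1 + j).choose (i + 1) := Nat.cast_pos.mpr (Nat.choose_pos (by lia))
    rw [chooseWeight, chooseWeight, Nat.add_sub_cancel, show i + (j + 1) = i + 1 + j by lia]
    push_cast
    refine le_of_eq ?_
    field_simp
    linarith

lemma half_pow_le_chooseWeight (i j : ℕ) : (1 / 2 : ℝ) ^ (i + j) ≤ chooseWeight i j := by
  rw [one_div, inv_pow]
  exact inv_anti₀ (Nat.cast_pos.mpr (Nat.choose_pos (Nat.le_add_right i j)))
    (by exact_mod_cast Nat.choose_le_two_pow _ _)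

variable {V : Type*} [NormedAddCommGroup V] [NormedSpace ℝ V] {L : ℕ × ℕ × ℕ → V} {M : ℝ}

lemma norm_moment_le (h_rec : ∀ k i j, L (k + 1, i, j) =
      L (k, i + 1, j) - (i / (2 * (j + 1)) : ℝ) • L (k, i - 1, j + 1))
    (hM : ∀ i j, ‖L (0, i, j)‖ ≤ M * chooseWeight i j) (hM₀ : 0 ≤ M) (k i j : ℕ) :
    ‖L (k, i, j)‖ ≤ 2 ^ k * (M * chooseWeight i j) := by
  induction k generalizing i j with
  | zero => simpa using hM i j
  | succ k ih =>
    have := (chooseWeight_pos i j).le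
    calc ‖L (k + 1, i, j)‖
        ≤ ‖L (k, i + 1, j)‖ + ‖(i / (2 * (j + 1)) : ℝ) • L (k, i - 1, j + 1)‖ := by
          rw [h_rec]; exact norm_sub_le _ _
      _ ≤ 2 ^ k * (M * chooseWeight (i + 1) j) +
            (i / (2 * (j + 1)) : ℝ) * (2 ^ k * (M * chooseWeight (i - 1) (j + 1))) := by
          rw [norm_smul, Real.norm_of_nonneg (by positivity)]
          gcongr <;> exact ih _ _
      _ = 2 ^ k * M * (chooseWeight (i + 1) j +
            1 / 2 * ((i / (j + 1) : ℝ) * chooseWeight (i - 1) (j + 1))) := by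
          field_simp
      _ ≤ 2 ^ k * M * (chooseWeight i j + 1 / 2 * chooseWeight i j) := by
          gcongr
          · exact chooseWeight_add_le i j 1 0
          · exact div_mul_chooseWeight_le i j
      _ ≤ 2 ^ k * M * (2 * chooseWeight i j) := by gcongr; linarith
      _ = 2 ^ (k + 1) * (M * chooseWeight i j) := by ring

variable {ι : Type*} {c : ι → V →L[ℝ] V} {e : ι → ℕ × ℕ × ℕ}

lemma norm_moment_zero_le_tsum_mul (h_rec : ∀ k i j, L (k + 1, i, j) =
      L (k, i + 1, j) - (i / (2 * (j + 1)) : ℝ) • L (k, i - 1, j + 1))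
    (hs : Summable fun ν => 2 ^ (e ν).1 * ‖c ν‖)
    (h_rel : ∀ i j, HasSum (fun ν => c ν (L (e ν + (0, i, j)))) (-L (0, i, j)))
    (hM : ∀ i j, ‖L (0, i, j)‖ ≤ M * chooseWeight i j) (hM₀ : 0 ≤ M) (i j : ℕ) :
    ‖L (0, i, j)‖ ≤ (∑' ν, 2 ^ (e ν).1 * ‖c ν‖) * M * chooseWeight i j := by
  have term_le (ν : ι) : ‖c ν (L (e ν + (0, i, j)))‖ ≤
      2 ^ (e ν).1 * ‖c ν‖ * (M * chooseWeight i j) := by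
    calc ‖c ν (L (e ν + (0, i, j)))‖ ≤ ‖c ν‖ * ‖L (e ν + (0, i, j))‖ := (c ν).le_opNorm _
      _ ≤ ‖c ν‖ * (2 ^ (e ν).1 * (M * chooseWeight (i + (e ν).2.1) (j + (e ν).2.2))) := by
        gcongr
        rw [add_comm i, add_comm j]
        exact norm_moment_le h_rec hM hM₀ _ _ _
      _ ≤ ‖c ν‖ * (2 ^ (e ν).1 * (M * chooseWeight i j)) := by
        gcongr
        exact chooseWeight_add_le i j _ _
      _ = _ := by ring
  rw [← norm_neg, ← (h_rel i j).tsum_eq, mul_assoc, ← tsum_mul_right]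
  exact tsum_of_norm_bounded (hs.mul_right _).hasSum term_le

/-- The relation `h_rel` improves any bound on the moments `L (0, i, j)` by the factor
`∑ ν, 2 ^ k_ν * ‖c ν‖ < 1`, since the recursion costs at most `2 ^ k`. -/
theorem moment_eq_zero_of_hasSum (h_rec : ∀ k i j, L (k + 1, i, j) =
      L (k, i + 1, j) - (i / (2 * (j + 1)) : ℝ) • L (k, i - 1, j + 1))
    (hs : Summable fun ν => 2 ^ (e ν).1 * ‖c ν‖) (hs_lt : ∑' ν, 2 ^ (e ν).1 * ‖c ν‖ < 1)
    (h_rel : ∀ i j, HasSum (fun ν => c ν (L (e ν + (0, i, j)))) (-L (0, i, j)))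
    (hM : ∀ i j, ‖L (0, i, j)‖ ≤ M * chooseWeight i j) : L = 0 := by
  set θ := ∑' ν, 2 ^ (e ν).1 * ‖c ν‖
  have hθ₀ : 0 ≤ θ := tsum_nonneg fun ν => by positivity
  have hM₀ : 0 ≤ M := nonneg_of_mul_nonneg_left ((norm_nonneg _).trans (hM 0 0))
    (chooseWeight_pos 0 0)
  have iterated (n : ℕ) : ∀ i j, ‖L (0, i, j)‖ ≤ θ ^ n * M * chooseWeight i j := by
    induction n with
    | zero => simpa using hM
    | succ n ih =>
      simpa only [pow_succ', mul_assoc] using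
        norm_moment_zero_le_tsum_mul h_rec hs h_rel ih (by positivity)
  have zeroth_eq_zero (i j : ℕ) : L (0, i, j) = 0 := by
    have bound_tendsto : Tendsto (fun n => θ ^ n * M * chooseWeight i j) atTop (𝓝 0) := by
      simpa using ((tendsto_pow_atTop_nhds_zero_of_lt_one hθ₀ hs_lt).mul_const M).mul_const _
    exact norm_le_zero_iff.mp (ge_of_tendsto' bound_tendsto fun n => iterated n i j)
  ext ⟨k, i, j⟩
  simpa using norm_moment_le h_rec (M := 0) (by simp [zeroth_eq_zero]) le_rfl k i j

end MomentDecay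

section ParabolicTransform

variable {V : Type*} [NormedAddCommGroup V]

/-- The range of `(α, a, q)`, with `α` the parameter along the parabola `σ = q + (a - α) ^ 2`. It is
large enough for `α` and `a` not to leave it while the parabola meets `{σ + α ^ 2 ≤ 1 / 16}`. -/
def parabolaBox : Set (ℝ × ℝ × ℝ) :=
  Icc (-(1 / 2)) (1 / 2) ×ˢ Icc (-(1 / 2)) (1 / 2) ×ˢ Icc 0 (1 / 2)

/-- The value of `F` at the point with parameter `α` on the parabola `σ = q + (a - α) ^ 2`. -/
def parabolaPullback (F : ℝ × ℝ → V) (x : ℝ × ℝ × ℝ) : V := F (x.1, x.2.2 + (x.2.1 - x.1) ^ 2)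

lemma isCompact_parabolaBox : IsCompact parabolaBox :=
  isCompact_Icc.prod (isCompact_Icc.prod isCompact_Icc)

lemma parabolaBox_subset_closure_interior : parabolaBox ⊆ closure (interior parabolaBox) := by
  have closure_Ioo_eq {a b : ℝ} (h : a < b) : closure (Ioo a b) = Icc a b := closure_Ioo h.ne
  simp only [parabolaBox, interior_prod_eq, interior_Icc, closure_prod_eq]
  rw [closure_Ioo_eq (by norm_num), closure_Ioo_eq (by norm_num)]

lemma norm_le_half_of_mem_parabolaBox {x : ℝ × ℝ × ℝ} (hx : x ∈ parabolaBox) : ‖x‖ ≤ 1 / 2 := by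
  obtain ⟨hα, ha, hq⟩ := hx
  simp only [norm_prod_le_iff, Real.norm_eq_abs]
  exact ⟨abs_le.mpr hα, abs_le.mpr ha, abs_le.mpr ⟨by linarith [hq.1], hq.2⟩⟩

lemma integrableOn_parabolaBox {h : ℝ × ℝ × ℝ → V} (hh : ContinuousOn h parabolaBox) :
    IntegrableOn h parabolaBox := hh.integrableOn_compact isCompact_parabolaBox

variable {F : ℝ × ℝ → V}

@[fun_prop]
lemma continuous_parabolaPullback (hF : Continuous F) : Continuous (parabolaPullback F) := by
  unfold parabolaPullback; fun_prop

lemma parabolaPullback_eq_zero (hF₀ : ∀ α σ, 1 / 16 < σ + α ^ 2 → F (α, σ) = 0) {α a q : ℝ}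
    (hα : α ∉ Icc (-(1 / 2)) (1 / 2)) (hq : 0 ≤ q) : parabolaPullback F (α, a, q) = 0 := by
  refine hF₀ _ _ ?_
  rw [mem_Icc, ← abs_le, not_le] at hα
  nlinarith [sq_abs α, sq_nonneg (a - α)]

variable [NormedSpace ℝ V]

lemma setIntegral_parabolaBox_eq_iterated {h : ℝ × ℝ × ℝ → V} (hh : Continuous h) :
    ∫ x in parabolaBox, h x = ∫ α in Icc (-(1 / 2) : ℝ) (1 / 2),
      ∫ q in (0 : ℝ)..1 / 2, ∫ a in -(1 / 2)..1 / 2, h (α, a, q) := by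
  rw [parabolaBox, Measure.volume_eq_prod,
    setIntegral_prod _ (integrableOn_parabolaBox hh.continuousOn)]
  refine integral_congr_ae (.of_forall fun α => ?_)
  have slice : IntegrableOn (fun p => h (α, p)) (Icc (-(1 / 2)) (1 / 2) ×ˢ Icc 0 (1 / 2)) :=
    (by fun_prop : Continuous fun p => h (α, p)).continuousOn.integrableOn_compact
      (isCompact_Icc.prod isCompact_Icc)
  simp only
  rw [Measure.volume_eq_prod, setIntegral_prod _ slice,
    intervalIntegral_intervalIntegral_swap_of_continuous (by fun_prop),
    intervalIntegral.integral_of_le (by norm_num), integral_Icc_eq_integral_Ioc]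
  refine integral_congr_ae (.of_forall fun a => ?_)
  simp only
  rw [intervalIntegral.integral_of_le (by norm_num), integral_Icc_eq_integral_Ioc]

lemma setIntegral_parabolaBox_eq_iterated_symm {h : ℝ × ℝ × ℝ → V}
    (hh : IntegrableOn h parabolaBox) :
    ∫ x in parabolaBox, h x = ∫ p in Icc (-(1 / 2)) (1 / 2) ×ˢ Icc 0 (1 / 2),
      ∫ α in Icc (-(1 / 2) : ℝ) (1 / 2), h (α, p) := by
  rw [IntegrableOn, parabolaBox, Measure.volume_eq_prod, ← Measure.prod_restrict] at hh
  rw [parabolaBox, Measure.volume_eq_prod, ← Measure.prod_restrict, integral_prod_symm _ hh]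

/-- The moment of `parabolaPullback F` of order `e` over `parabolaBox`. -/
noncomputable def parabolaMoment (F : ℝ × ℝ → V) (e : ℕ × ℕ × ℕ) : V :=
  ∫ x in parabolaBox, tripleMonomial e x • parabolaPullback F x

lemma integrableOn_smul_parabolaPullback (hF : Continuous F) (e : ℕ × ℕ × ℕ) :
    IntegrableOn (fun x => tripleMonomial e x • parabolaPullback F x) parabolaBox :=
  integrableOn_parabolaBox (by fun_prop)

lemma norm_parabolaMoment_zero_le (hF : Continuous F) (i j : ℕ) :
    ‖parabolaMoment F (0, i, j)‖ ≤
      (∫ x in parabolaBox, ‖parabolaPullback F x‖) * chooseWeight i j := by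
  rw [← integral_mul_const]
  refine norm_integral_le_of_norm_le (integrableOn_parabolaBox (by fun_prop))
    (ae_restrict_of_forall_mem isCompact_parabolaBox.measurableSet fun x hx => ?_)
  have hx' := norm_le_half_of_mem_parabolaBox hx
  simp only [norm_prod_le_iff, Real.norm_eq_abs] at hx'
  rw [norm_smul, mul_comm]
  gcongr
  calc ‖tripleMonomial (0, i, j) x‖ = |x.2.1| ^ i * |x.2.2| ^ j := by
        simp [tripleMonomial]
    _ ≤ (1 / 2) ^ i * (1 / 2) ^ j := by gcongr; exacts [hx'.2.1, hx'.2.2]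
    _ ≤ chooseWeight i j := by rw [← pow_add]; exact half_pow_le_chooseWeight i j

theorem parabolaMoment_succ [CompleteSpace V] (hF : Continuous F)
    (hF₀ : ∀ α σ, 1 / 16 < σ + α ^ 2 → F (α, σ) = 0) (k i j : ℕ) :
    parabolaMoment F (k + 1, i, j) = parabolaMoment F (k, i + 1, j) -
      (i / (2 * (j + 1)) : ℝ) • parabolaMoment F (k, i - 1, j + 1) := by
  have by_parts (α : ℝ) :
      ∫ q in (0 : ℝ)..1 / 2, ∫ a in -(1 / 2)..1 / 2,
          (a ^ i * (a - α) * q ^ j) • parabolaPullback F (α, a, q) =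
        (i / (2 * (j + 1)) : ℝ) • ∫ q in (0 : ℝ)..1 / 2, ∫ a in -(1 / 2)..1 / 2,
          (a ^ (i - 1) * q ^ (j + 1)) • parabolaPullback F (α, a, q) := by
    have := integral_monomial_smul_comp_parabola (g := fun t => F (α, t)) (by fun_prop)
      (ω := 1 / 8 - α ^ 2) (l := -(1 / 2)) (r := 1 / 2) (b := 1 / 2) (α := α)
      (fun t ht => hF₀ α t (by linarith)) (by nlinarith [sq_nonneg (α + 1 / 4)])
      (by nlinarith [sq_nonneg (α - 1 / 4)]) (by norm_num) (by nlinarith) i j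
    rw [show (i / (2 * (j + 1)) : ℝ) = (2 * (j + 1) : ℝ)⁻¹ * i from div_eq_inv_mul _ _, mul_smul]
    exact (eq_inv_smul_iff₀ (by positivity)).mpr this
  rw [eq_sub_iff_add_eq', ← eq_sub_iff_add_eq]
  symm
  calc parabolaMoment F (k, i + 1, j) - parabolaMoment F (k + 1, i, j)
      = ∫ x in parabolaBox, (x.1 ^ k * (x.2.1 ^ i * (x.2.1 - x.1) * x.2.2 ^ j)) •
          parabolaPullback F x := by
        rw [parabolaMoment, parabolaMoment, ← integral_sub
          (integrableOn_smul_parabolaPullback hF _) (integrableOn_smul_parabolaPullback hF _)]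
        congr with x
        rw [← sub_smul]
        congr 1
        simp only [tripleMonomial]
        ring
    _ = ∫ x in parabolaBox, (x.1 ^ k * (i / (2 * (j + 1)) * (x.2.1 ^ (i - 1) * x.2.2 ^ (j + 1)))) •
          parabolaPullback F x := by
        rw [setIntegral_parabolaBox_eq_iterated (by fun_prop),
          setIntegral_parabolaBox_eq_iterated (by fun_prop)]
        simp only [mul_smul (_ ^ k), intervalIntegral.integral_smul, by_parts,
          mul_smul (_ / _)]
    _ = (i / (2 * (j + 1)) : ℝ) • parabolaMoment F (k, i - 1, j + 1) := by
        rw [parabolaMoment, ← integral_smul]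
        congr with x
        rw [smul_smul]
        congr 1
        simp only [tripleMonomial]
        ring

theorem hasSum_clm_parabolaMoment [CompleteSpace V] (hF : Continuous F)
    {T : ℝ × ℝ × ℝ → V →L[ℝ] V} {ι : Type*} [Countable ι] {c : ι → V →L[ℝ] V}
    {e : ι → ℕ × ℕ × ℕ} (hs : Summable fun ν => 2 ^ (e ν).1 * ‖c ν‖)
    (h_sum : ∀ x, ‖x‖ ≤ 1 → HasSum (fun ν => tripleMonomial (e ν) x • c ν) (T x))
    (e' : ℕ × ℕ × ℕ) :
    HasSum (fun ν => c ν (parabolaMoment F (e ν + e')))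
      (∫ x in parabolaBox, tripleMonomial e' x • T x (parabolaPullback F x)) := by
  have unit_of_mem {x} (hx : x ∈ parabolaBox) : ‖x‖ ≤ 1 :=
    (norm_le_half_of_mem_parabolaBox hx).trans (by norm_num)
  have term_eq (ν : ι) : c ν (parabolaMoment F (e ν + e')) = ∫ x in parabolaBox,
      tripleMonomial e' x • (tripleMonomial (e ν) x • c ν) (parabolaPullback F x) := by
    rw [parabolaMoment, ← (c ν).integral_comp_comm (integrableOn_smul_parabolaPullback hF _)]
    congr with x
    rw [map_smul, tripleMonomial_add, mul_comm, mul_smul, _root_.smul_apply]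
  simp only [term_eq]
  refine hasSum_integral_of_dominated_convergence
    (fun ν x => 2 ^ (e ν).1 * ‖c ν‖ * ‖parabolaPullback F x‖)
    (fun ν => by fun_prop) (fun ν => ?_) (.of_forall fun x => hs.mul_right _) ?_ ?_
  · refine ae_restrict_of_forall_mem isCompact_parabolaBox.measurableSet fun x hx => ?_
    calc ‖tripleMonomial e' x • (tripleMonomial (e ν) x • c ν) (parabolaPullback F x)‖
        ≤ 1 * (‖tripleMonomial (e ν) x • c ν‖ * ‖parabolaPullback F x‖) := by
          rw [norm_smul]
          gcongr
          exacts [abs_tripleMonomial_le_one e' (unit_of_mem hx), ContinuousLinearMap.le_opNorm _ _]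
      _ ≤ 2 ^ (e ν).1 * ‖c ν‖ * ‖parabolaPullback F x‖ := by
          rw [one_mul]
          gcongr
          exact norm_tripleMonomial_smul_le (e ν) (unit_of_mem hx) (c ν)
  · simp only [tsum_mul_right]
    exact integrableOn_parabolaBox (V := ℝ) (by fun_prop)
  · refine ae_restrict_of_forall_mem isCompact_parabolaBox.measurableSet fun x hx => ?_
    exact ((h_sum x (unit_of_mem hx)).mapL
      (ContinuousLinearMap.apply ℝ V (parabolaPullback F x))).const_smul _

theorem setIntegral_tripleMonomial_smul_clm_parabolaPullback (hF : Continuous F)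
    (hF₀ : ∀ α σ, 1 / 16 < σ + α ^ 2 → F (α, σ) = 0) {T : ℝ × ℝ × ℝ → V →L[ℝ] V}
    (hT : ContinuousOn T parabolaBox)
    (h_int : ∀ a q, |a| ≤ 1 / 2 → 0 ≤ q → q ≤ 1 / 2 → ∫ α, (parabolaPullback F (α, a, q) +
      T (α, a, q) (parabolaPullback F (α, a, q))) = 0) (i j : ℕ) :
    ∫ x in parabolaBox, tripleMonomial (0, i, j) x • T x (parabolaPullback F x) =
      -parabolaMoment F (0, i, j) := by
  have integrable_clm : IntegrableOn
      (fun x => tripleMonomial (0, i, j) x • T x (parabolaPullback F x)) parabolaBox :=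
    integrableOn_parabolaBox <| (continuous_tripleMonomial _).continuousOn.smul <|
      hT.clm_apply (continuous_parabolaPullback hF).continuousOn
  have integrable_add := (integrableOn_smul_parabolaPullback hF (0, i, j)).add integrable_clm
  rw [eq_neg_iff_add_eq_zero, add_comm, parabolaMoment, ← integral_add'
    (integrableOn_smul_parabolaPullback hF _) integrable_clm,
    setIntegral_parabolaBox_eq_iterated_symm integrable_add]
  refine setIntegral_eq_zero_of_forall_eq_zero fun ⟨a, q⟩ ⟨ha, hq⟩ => ?_
  have monomial_eq (α : ℝ) : tripleMonomial (0, i, j) (α, a, q) = a ^ i * q ^ j := by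
    simp [tripleMonomial]
  simp only [Pi.add_apply, ← smul_add, monomial_eq, integral_smul]
  rw [setIntegral_eq_integral_of_forall_compl_eq_zero fun α hα => ?_,
    h_int a q (abs_le.mpr ha) hq.1 hq.2, smul_zero]
  rw [parabolaPullback_eq_zero hF₀ hα hq.1, map_zero, add_zero]

theorem eq_zero_of_integral_parabolaPullback_eq_zero [CompleteSpace V] (hF : Continuous F)
    (hF₀ : ∀ α σ, 1 / 16 < σ + α ^ 2 → F (α, σ) = 0) {T : ℝ × ℝ × ℝ → V →L[ℝ] V} {C : ℝ}
    (hT : HasMajorizedSeries T C) (hC : C < 1)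
    (h_int : ∀ a q, |a| ≤ 1 / 2 → 0 ≤ q → q ≤ 1 / 2 → ∫ α, (parabolaPullback F (α, a, q) +
      T (α, a, q) (parabolaPullback F (α, a, q))) = 0) {α σ : ℝ} (hσ : 0 ≤ σ) : F (α, σ) = 0 := by
  have hT_cont : ContinuousOn T parabolaBox := hT.continuousOn.mono fun x hx =>
    mem_closedBall_zero_iff.mpr ((norm_le_half_of_mem_parabolaBox hx).trans (by norm_num))
  obtain ⟨ι, _, c, e, hs, hsC, h_sum⟩ := hT
  have moments_eq_zero : parabolaMoment F = 0 :=
    moment_eq_zero_of_hasSum (parabolaMoment_succ hF hF₀) hs (hsC.trans_lt hC)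
      (fun i j => setIntegral_tripleMonomial_smul_clm_parabolaPullback hF hF₀ hT_cont h_int i j ▸
        hasSum_clm_parabolaMoment hF hs h_sum (0, i, j))
      (norm_parabolaMoment_zero_le hF)
  have pullback_eq_zero : EqOn (parabolaPullback F) 0 parabolaBox :=
    eqOn_zero_of_setIntegral_tripleMonomial_smul_eq_zero isCompact_parabolaBox
      parabolaBox_subset_closure_interior (by fun_prop) (congrFun moments_eq_zero)
  rcases lt_or_ge (1 / 16) (σ + α ^ 2) with h_out | h_in
  · exact hF₀ α σ h_out
  · have hα : α ∈ Icc (-(1 / 2) : ℝ) (1 / 2) := ⟨by nlinarith, by nlinarith⟩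
    simpa [parabolaPullback] using pullback_eq_zero (x := (α, α, σ)) ⟨hα, hα, hσ, by nlinarith⟩

end ParabolicTransform

section AttenuatedParabolicTransform

variable {𝔸 V : Type*} [NormedRing 𝔸] [NormedAlgebra ℝ 𝔸] [NormOneClass 𝔸] [CompleteSpace 𝔸]
  [NormedAddCommGroup V] [NormedSpace ℝ V] [CompleteSpace V] [Module 𝔸 V] [IsBoundedSMul 𝔸 V]
  [IsScalarTower ℝ 𝔸 V]

theorem eq_zero_of_attenuated_integral_parabola_eq_zero {F : ℝ × ℝ → V} (hF : Continuous F)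
    (hF₀ : ∀ α σ, 1 / 16 < σ + α ^ 2 → F (α, σ) = 0) {M : ℝ × ℝ × ℝ → 𝔸} {C : ℝ}
    (hM : HasMajorizedSeries M C) (hC : C < 1 / 4) (hM_cont : ∀ y, Continuous fun s => M (s, y))
    (h_int : ∀ a q, |a| ≤ 1 / 2 → 0 ≤ q → q ≤ 1 / 2 → ∀ W : ℝ → 𝔸, W 0 = 1 →
      (∀ α, HasDerivAt W (W α * M (α, a, q)) α) → ∫ α, W α • F (α, q + (a - α) ^ 2) = 0)
    {α σ : ℝ} (hσ : 0 ≤ σ) : F (α, σ) = 0 := by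
  let B := fun x => (ContinuousLinearMap.mul ℝ 𝔸).flip (M x)
  have hB_cont (y : ℝ × ℝ) : Continuous fun s => B (s, y) :=
    (ContinuousLinearMap.mul ℝ 𝔸).flip.continuous.comp (hM_cont y)
  have hB : HasMajorizedSeries B C := (hM.clm_comp _).mono <| by
    rw [ContinuousLinearMap.opNorm_flip]
    exact mul_le_of_le_one_left hM.nonneg (ContinuousLinearMap.opNorm_mul_le ℝ 𝔸)
  let W := fun x : ℝ × ℝ × ℝ => ∑' n, dysonTerm (fun s => B (s, x.2)) 1 n x.1
  have hW : HasMajorizedSeries (fun x => W x - 1) (4 * C) := by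
    simpa using hB.tsum_dysonTerm_sub hC.le hB_cont (1 : 𝔸)
  have hT : HasMajorizedSeries (fun x => ContinuousLinearMap.lsmul ℝ 𝔸 (W x - 1) : _ → V →L[ℝ] V)
      (4 * C) := (hW.clm_comp _).mono <|
    mul_le_of_le_one_left hW.nonneg ContinuousLinearMap.opNorm_lsmul_le
  refine eq_zero_of_integral_parabolaPullback_eq_zero hF hF₀ hT (by linarith)
    (fun a q ha hq₀ hq => ?_) hσ
  simpa [sub_smul, parabolaPullback] using h_int a q ha hq₀ hq (fun α => W (α, a, q))
    (tsum_dysonTerm_zero (hB_cont (a, q))) (hasDerivAt_tsum_dysonTerm (hB_cont (a, q)))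

end AttenuatedParabolicTransform

section LineFamily

variable {H : Type*} [NormedAddCommGroup H] [InnerProductSpace ℝ H]

/-- The direction `v₀ - a x₀`, normalized: the glancing direction `v₀` tilted by the slope `a`. -/
noncomputable def tiltedDirection (x₀ v₀ : H) (a : ℝ) : H := (√(1 + a ^ 2))⁻¹ • (v₀ - a • x₀)

/-- The foot point of the line through `z + (1 + q + a ^ 2) x₀` with direction
`tiltedDirection x₀ v₀ a`, for `z` orthogonal to `x₀` and `v₀`. -/
noncomputable def tiltedFoot (x₀ v₀ z : H) (a q : ℝ) : H :=
  z + ((1 + q + a ^ 2) * (1 + a ^ 2)⁻¹) • (x₀ + a • v₀)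

/-- Coordinates `(z, α, σ)` near `x₀` in which the tilted line of parameters `(a, q)` in the plane
`z + span {x₀, v₀}` becomes the parabola `σ = q + (a - α) ^ 2`. -/
noncomputable def parabolicPoint (x₀ v₀ z : H) (α σ : ℝ) : H :=
  z + (1 + σ - α ^ 2) • x₀ + (2 * α) • v₀

lemma tiltedFoot_add_smul_tiltedDirection (x₀ v₀ z : H) (a q α : ℝ) :
    tiltedFoot x₀ v₀ z a q +
      (-(a * (1 + q + a ^ 2) * (√(1 + a ^ 2))⁻¹) + 2 * √(1 + a ^ 2) * α) •
        tiltedDirection x₀ v₀ a = parabolicPoint x₀ v₀ z α (q + (a - α) ^ 2) := by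
  have sqrt_mul_inv : √(1 + a ^ 2) * (√(1 + a ^ 2))⁻¹ = 1 := mul_inv_cancel₀ (by positivity)
  have inv_mul_inv : (√(1 + a ^ 2))⁻¹ * (√(1 + a ^ 2))⁻¹ = (1 + a ^ 2)⁻¹ := by
    rw [← mul_inv, Real.mul_self_sqrt (by positivity)]
  have mul_inv : (1 + a ^ 2) * (1 + a ^ 2)⁻¹ = 1 := mul_inv_cancel₀ (by positivity)
  simp only [tiltedFoot, tiltedDirection, parabolicPoint, smul_smul, add_mul]
  match_scalars
  · ring
  · linear_combination (1 + q + a ^ 2) * mul_inv + a ^ 2 * (1 + q + a ^ 2) * inv_mul_inv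
      - 2 * α * a * sqrt_mul_inv
  · linear_combination 2 * α * sqrt_mul_inv - a * (1 + q + a ^ 2) * inv_mul_inv

lemma parabolicPoint_rescale (x₀ v₀ z : H) (r a q α : ℝ) :
    parabolicPoint x₀ v₀ z (r * α) (r ^ 2 * (q - 1 / 16) + (r * a - r * α) ^ 2) =
      parabolicPoint x₀ v₀ z (r * α) (r ^ 2 * (q + (a - α) ^ 2 - 1 / 16)) := by
  congr 1; ring

section Orthonormal

variable {x₀ v₀ z : H} (hx₀ : ‖x₀‖ = 1) (hv₀ : ‖v₀‖ = 1) (hx₀v₀ : ⟪x₀, v₀⟫ = 0)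

include hx₀ hv₀ hx₀v₀

lemma norm_tiltedDirection (a : ℝ) : ‖tiltedDirection x₀ v₀ a‖ = 1 := by
  have norm_eq : ‖v₀ - a • x₀‖ = √(1 + a ^ 2) := by
    rw [eq_comm, Real.sqrt_eq_iff_eq_sq (by positivity) (norm_nonneg _), norm_sub_sq_real,
      inner_smul_right, real_inner_comm, hx₀v₀, norm_smul, hx₀, hv₀]
    simp
  rw [tiltedDirection, norm_smul, norm_eq, norm_inv, Real.norm_of_nonneg (Real.sqrt_nonneg _)]
  exact inv_mul_cancel₀ (by positivity)

variable (hzx₀ : ⟪z, x₀⟫ = 0) (hzv₀ : ⟪z, v₀⟫ = 0)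

include hzx₀ hzv₀

lemma inner_tiltedFoot_tiltedDirection (a q : ℝ) :
    ⟪tiltedFoot x₀ v₀ z a q, tiltedDirection x₀ v₀ a⟫ = 0 := by
  have frame : ⟪x₀ + a • v₀, v₀ - a • x₀⟫ = 0 := by
    simp [inner_add_left, inner_sub_right, inner_smul_left, inner_smul_right, hx₀v₀, hx₀, hv₀,
      real_inner_comm x₀ v₀]
  rw [tiltedFoot, tiltedDirection, inner_smul_right, inner_add_left, inner_smul_left, frame,
    inner_sub_right, inner_smul_right, hzx₀, hzv₀]
  simp only [mul_zero, sub_zero, add_zero]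

lemma one_lt_norm_parabolicPoint {α σ : ℝ} (h : 0 < σ + α ^ 2) :
    1 < ‖parabolicPoint x₀ v₀ z α σ‖ := by
  have norm_sq : ‖parabolicPoint x₀ v₀ z α σ‖ ^ 2 =
      ‖z‖ ^ 2 + (1 + σ - α ^ 2) ^ 2 + (2 * α) ^ 2 := by
    rw [parabolicPoint, norm_add_sq_real, norm_add_sq_real]
    simp [inner_add_left, inner_smul_left, inner_smul_right, norm_smul, mul_pow, hx₀, hv₀, hx₀v₀,
      hzx₀, hzv₀]
  rw [← one_lt_sq_iff₀ (norm_nonneg _), norm_sq]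
  nlinarith [sq_nonneg ‖z‖, sq_nonneg (σ - α ^ 2)]

end Orthonormal

lemma exists_eq_parabolicPoint {x₀ v₀ : H} (hx₀ : ‖x₀‖ = 1) (hv₀ : ‖v₀‖ = 1)
    (hx₀v₀ : ⟪x₀, v₀⟫ = 0) (x : H) : ∃ z α σ, ⟪z, x₀⟫ = 0 ∧ ⟪z, v₀⟫ = 0 ∧ ‖z‖ ≤ ‖x - x₀‖ ∧
      -‖x - x₀‖ ≤ σ ∧ parabolicPoint x₀ v₀ z α σ = x := by
  set w := x - x₀
  set z := w - ⟪w, x₀⟫ • x₀ - ⟪w, v₀⟫ • v₀ with hz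
  have hzx₀ : ⟪z, x₀⟫ = 0 := by
    simp [hz, inner_sub_left, inner_smul_left, hx₀, real_inner_comm x₀ v₀, hx₀v₀]
  have hzv₀ : ⟪z, v₀⟫ = 0 := by simp [hz, inner_sub_left, inner_smul_left, hv₀, hx₀v₀]
  refine ⟨z, ⟪w, v₀⟫ / 2, ⟪w, x₀⟫ + (⟪w, v₀⟫ / 2) ^ 2, hzx₀, hzv₀, ?_, ?_, ?_⟩
  · have norm_sq : ‖z‖ * ‖z‖ = ⟪z, w⟫ := by
      rw [← real_inner_self_eq_norm_mul_norm]
      nth_rw 2 [hz]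
      simp [inner_sub_right, inner_smul_right, hzx₀, hzv₀]
    nlinarith [real_inner_le_norm z w, norm_nonneg z, norm_nonneg w]
  · have := neg_le_of_abs_le (abs_real_inner_le_norm w x₀)
    rw [hx₀, mul_one] at this
    nlinarith [sq_nonneg (⟪w, v₀⟫ / 2)]
  · rw [parabolicPoint, ← sub_add_cancel x x₀]
    change _ = w + x₀
    rw [hz]
    module

end LineFamily

section Analyticity

variable {H : Type*} [NormedAddCommGroup H] [InnerProductSpace ℝ H]

attribute [local fun_prop] analyticAt_fst analyticAt_snd

@[fun_prop]
lemma analyticAt_sqrt_one_add_sq {E : Type*} [NormedAddCommGroup E] [NormedSpace ℝ E] {g : E → ℝ}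
    {y : E} (hg : AnalyticAt ℝ g y) : AnalyticAt ℝ (fun y => √(1 + g y ^ 2)) y := by
  have h_sqrt : AnalyticAt ℝ Real.sqrt (1 + g y ^ 2) :=
    (Real.contDiffAt_sqrt (n := ⊤) (by positivity)).analyticAt
  exact h_sqrt.comp (f := fun y => 1 + g y ^ 2) (by fun_prop)

lemma analyticAt_tiltedDirection (x₀ v₀ : H) (a : ℝ) : AnalyticAt ℝ (tiltedDirection x₀ v₀) a := by
  unfold tiltedDirection
  fun_prop (disch := positivity)

lemma analyticAt_tiltedFoot (x₀ v₀ : H) (y : H × ℝ × ℝ) :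
    AnalyticAt ℝ (fun y : H × ℝ × ℝ => tiltedFoot x₀ v₀ y.1 y.2.1 y.2.2) y := by
  unfold tiltedFoot
  fun_prop (disch := positivity)

lemma analyticAt_parabolicPoint (x₀ v₀ : H) (y : H × ℝ × ℝ) :
    AnalyticAt ℝ (fun y : H × ℝ × ℝ => parabolicPoint x₀ v₀ y.1 y.2.1 y.2.2) y := by
  unfold parabolicPoint
  fun_prop

lemma continuous_parabolicPoint (x₀ v₀ z : H) :
    Continuous fun y : ℝ × ℝ => parabolicPoint x₀ v₀ z y.1 y.2 := by
  unfold parabolicPoint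
  fun_prop

variable {𝔸 : Type*} [NormedRing 𝔸] [NormedAlgebra ℝ 𝔸]

/-- The attenuation of the tilted line with parameters `(z, a, q)` at its point with parabolic
coordinate `α`, relative to the parameter `α` instead of arc length. -/
noncomputable def tiltedAttenuation (x₀ v₀ : H) (A : H × H × H → 𝔸) (y : H × ℝ × ℝ × ℝ) : 𝔸 :=
  (2 * √(1 + y.2.1 ^ 2)) • A (tiltedFoot x₀ v₀ y.1 y.2.1 y.2.2.1, tiltedDirection x₀ v₀ y.2.1,
    parabolicPoint x₀ v₀ y.1 y.2.2.2 (y.2.2.1 + (y.2.1 - y.2.2.2) ^ 2))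

lemma continuous_tiltedAttenuation_right {A : H × H × H → 𝔸} (hA : Continuous A) (x₀ v₀ z : H)
    (a q : ℝ) : Continuous fun α => tiltedAttenuation x₀ v₀ A (z, a, q, α) := by
  simp only [tiltedAttenuation, parabolicPoint]
  fun_prop

lemma analyticAt_tiltedAttenuation {x₀ v₀ : H} {A : H × H × H → 𝔸}
    (hA : AnalyticAt ℝ A (x₀, v₀, x₀)) : AnalyticAt ℝ (tiltedAttenuation x₀ v₀ A) 0 := by
  have h_foot := (analyticAt_tiltedFoot x₀ v₀ 0).comp_of_eq
    (f := fun y : H × ℝ × ℝ × ℝ => (y.1, y.2.1, y.2.2.1)) (x := 0) (by fun_prop) rfl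
  have h_dir := (analyticAt_tiltedDirection x₀ v₀ 0).comp_of_eq
    (f := fun y : H × ℝ × ℝ × ℝ => y.2.1) (x := 0) (by fun_prop) rfl
  have h_point := (analyticAt_parabolicPoint x₀ v₀ 0).comp_of_eq
    (f := fun y : H × ℝ × ℝ × ℝ => (y.1, y.2.2.2, y.2.2.1 + (y.2.1 - y.2.2.2) ^ 2)) (x := 0)
    (by fun_prop) (by simp)
  have h_speed : AnalyticAt ℝ (fun y : H × ℝ × ℝ × ℝ => 2 * √(1 + y.2.1 ^ 2)) 0 := by fun_prop
  refine h_speed.smul (hA.comp_of_eq (h_foot.prod (h_dir.prod h_point)) ?_)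
  simp [tiltedFoot, tiltedDirection, parabolicPoint]

lemma eventually_norm_tiltedLine_sub_lt (x₀ v₀ : H) {δ : ℝ} (hδ : 0 < δ) :
    ∀ᶠ r in 𝓝[>] 0, ∀ z a q, ‖z‖ ≤ r → |a| ≤ r → |q| ≤ r →
      ‖tiltedDirection x₀ v₀ a - v₀‖ < δ ∧ ‖tiltedFoot x₀ v₀ z a q - x₀‖ < δ := by
  have near : ∀ᶠ y : H × ℝ × ℝ in 𝓝 0, ‖tiltedDirection x₀ v₀ y.2.1 - v₀‖ < δ ∧
      ‖tiltedFoot x₀ v₀ y.1 y.2.1 y.2.2 - x₀‖ < δ := by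
    have h_dir := (analyticAt_tiltedDirection x₀ v₀ 0).continuousAt.comp_of_eq
      (f := fun y : H × ℝ × ℝ => y.2.1) (x := 0) (by fun_prop) rfl
    have h_foot := (analyticAt_tiltedFoot x₀ v₀ 0).continuousAt
    refine ((h_dir.sub_const v₀).norm.eventually_lt_const ?_).and
      ((h_foot.sub_const x₀).norm.eventually_lt_const ?_)
    · simpa [tiltedDirection] using hδ
    · simpa [tiltedFoot] using hδ
  obtain ⟨η, hη, near⟩ := Metric.eventually_nhds_iff.mp near
  filter_upwards [Ioo_mem_nhdsGT hη] with r hr z a q hz ha hq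
  refine @near (z, a, q) ?_
  rw [dist_zero_right]
  exact (norm_prod_le_iff.mpr ⟨hz, norm_prod_le_iff.mpr ⟨ha, hq⟩⟩).trans_lt hr.2

lemma exists_hasMajorizedSeries_rescale {E : Type*} [NormedAddCommGroup E] [NormedSpace ℝ E]
    [CompleteSpace E] {G : H × ℝ × ℝ × ℝ → E} (hG : AnalyticAt ℝ G 0) :
    ∃ C, ∀ᶠ r in 𝓝[>] (0 : ℝ), ∀ z, ‖z‖ ≤ r → HasMajorizedSeries
      (fun x => G (z, r * x.2.1, r ^ 2 * (x.2.2 - 1 / 16), r * x.1)) C := by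
  obtain ⟨p, R, hp⟩ := hG
  obtain ⟨R', hR'₀, hR'⟩ := ENNReal.lt_iff_exists_nnreal_btwn.mp hp.r_pos
  set ρ : NNReal := R' / 8
  have hρ : ((8 * ρ : NNReal) : ENNReal) < R := by rwa [mul_div_cancel₀ _ (by norm_num)]
  have hρ₀ : 0 < (ρ : ℝ) := div_pos (by exact_mod_cast hR'₀) (by norm_num)
  refine ⟨∑' n, ‖p n‖ * (8 * ρ) ^ n, ?_⟩
  filter_upwards [Ioo_mem_nhdsGT hρ₀, Ioo_mem_nhdsGT one_pos] with r ⟨hr₀, hr⟩ ⟨_, hr₁⟩ z hz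
  have hr_sq : r ^ 2 ≤ ρ := by nlinarith
  have hu : ∀ d, ‖(![(z, 0, -(r ^ 2 / 16), 0), (0, 0, 0, r), (0, r, 0, 0), (0, 0, r ^ 2, 0)] :
      Fin 4 → H × ℝ × ℝ × ℝ) d‖ ≤ ρ := by
    have abs_sq_div : |r ^ 2 / 16| ≤ (ρ : ℝ) := by rw [abs_of_nonneg (by positivity)]; linarith
    simp [Fin.forall_fin_succ, norm_prod_le_iff, abs_of_pos hr₀, hr.le, hr_sq, abs_sq_div,
      hz.trans hr.le]
  convert hasMajorizedSeries_comp_affine hp hρ hu using 3 with x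
  simp [Fin.sum_univ_four, sub_eq_add_neg, mul_add, mul_comm, add_comm, div_eq_inv_mul]

end Analyticity

section RayTransform

variable {H : Type*} [NormedAddCommGroup H] [InnerProductSpace ℝ H]
  {𝔸 V : Type*} [NormedRing 𝔸] [NormedAlgebra ℝ 𝔸]
  [NormedAddCommGroup V] [NormedSpace ℝ V] [Module 𝔸 V]

/-- The attenuated ray transform of `f` with attenuation `A` vanishes on the line `t ↦ p + t v`. -/
def AttenuatedRayTransformVanishes (A : H × H × H → 𝔸) (f : H → V) (p v : H) : Prop :=
  AttenuatedIntegralVanishes (fun t : ℝ => A (p, v, p + t • v)) (fun t => f (p + t • v))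

variable {x₀ v₀ z : H} {A : H × H × H → 𝔸} {f : H → V}

variable [CompleteSpace 𝔸] [IsBoundedSMul 𝔸 V] [IsScalarTower ℝ 𝔸 V]

lemma AttenuatedRayTransformVanishes.integral_smul_parabolicPoint_eq_zero {a q r : ℝ}
    (h : AttenuatedRayTransformVanishes A f (tiltedFoot x₀ v₀ z a q) (tiltedDirection x₀ v₀ a))
    (hA : Continuous A) {W : ℝ → 𝔸} (hW₀ : W 0 = 1)
    (hW : ∀ α, HasDerivAt W (W α * r • tiltedAttenuation x₀ v₀ A (z, a, q, r * α)) α) :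
    ∫ α, W α • f (parabolicPoint x₀ v₀ z (r * α) (q + (a - r * α) ^ 2)) = 0 := by
  have on_line (α : ℝ) := tiltedFoot_add_smul_tiltedDirection x₀ v₀ z a q (r * α)
  simp only [← mul_assoc] at on_line
  simp only [← on_line]
  refine AttenuatedIntegralVanishes.integral_smul_comp_affine_eq_zero h (by fun_prop) hW₀
    fun α => (hW α).congr_deriv ?_
  simp only [tiltedAttenuation, on_line, smul_smul]
  congr 2
  ring

variable [NormOneClass 𝔸] [CompleteSpace V]

theorem eq_zero_of_attenuatedRayTransformVanishes_tiltedLines (hx₀ : ‖x₀‖ = 1) (hv₀ : ‖v₀‖ = 1)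
    (hx₀v₀ : ⟪x₀, v₀⟫ = 0) (hzx₀ : ⟪z, x₀⟫ = 0) (hzv₀ : ⟪z, v₀⟫ = 0) (hA : Continuous A)
    (hf : Continuous f) (hf₀ : ∀ x, 1 < ‖x‖ → f x = 0) {r C : ℝ} (hr : 0 < r)
    (h_series : HasMajorizedSeries (fun x => tiltedAttenuation x₀ v₀ A
      (z, r * x.2.1, r ^ 2 * (x.2.2 - 1 / 16), r * x.1)) C) (hC : r * C < 1 / 4)
    (h : ∀ a q, |a| ≤ r → |q| ≤ r ^ 2 →
      AttenuatedRayTransformVanishes A f (tiltedFoot x₀ v₀ z a q) (tiltedDirection x₀ v₀ a))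
    {α σ : ℝ} (hσ : -(r ^ 2 / 16) ≤ σ) : f (parabolicPoint x₀ v₀ z α σ) = 0 := by
  have rescaled {α σ : ℝ} (hσ : 0 ≤ σ) :
      f (parabolicPoint x₀ v₀ z (r * α) (r ^ 2 * (σ - 1 / 16))) = 0 := by
    refine eq_zero_of_attenuated_integral_parabola_eq_zero (𝔸 := 𝔸)
      (F := fun y => f (parabolicPoint x₀ v₀ z (r * y.1) (r ^ 2 * (y.2 - 1 / 16))))
      (M := fun x => r • tiltedAttenuation x₀ v₀ A
        (z, r * x.2.1, r ^ 2 * (x.2.2 - 1 / 16), r * x.1)) ?_ ?_ (h_series.const_smul r)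
      (by rwa [abs_of_pos hr]) ?_ ?_ (α := α) hσ
    · exact hf.comp ((continuous_parabolicPoint x₀ v₀ z).comp
        (f := fun y : ℝ × ℝ => (r * y.1, r ^ 2 * (y.2 - 1 / 16))) (by fun_prop))
    · intro α σ outside
      refine hf₀ _ (one_lt_norm_parabolicPoint hx₀ hv₀ hx₀v₀ hzx₀ hzv₀ ?_)
      calc 0 < r ^ 2 * (σ + α ^ 2 - 1 / 16) := mul_pos (by positivity) (by linarith)
        _ = r ^ 2 * (σ - 1 / 16) + (r * α) ^ 2 := by ring
    · exact fun y => ((continuous_tiltedAttenuation_right hA x₀ v₀ z (r * y.1)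
        (r ^ 2 * (y.2 - 1 / 16))).comp (continuous_const_mul r)).const_smul r
    · intro a q ha hq₀ hq W hW₀ hW
      simp only [← parabolicPoint_rescale]
      refine (h (r * a) (r ^ 2 * (q - 1 / 16)) ?_ ?_).integral_smul_parabolicPoint_eq_zero hA hW₀ hW
      · rw [abs_mul, abs_of_pos hr]
        exact mul_le_of_le_one_right hr.le (by linarith)
      · rw [abs_mul, abs_of_nonneg (sq_nonneg r)]
        exact mul_le_of_le_one_right (sq_nonneg r) (abs_le.mpr ⟨by linarith, by linarith⟩)
  have in_domain : 0 ≤ σ / r ^ 2 + 1 / 16 := by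
    rw [← neg_le_iff_add_nonneg, le_div_iff₀ (by positivity)]
    linarith
  convert rescaled (α := α / r) in_domain using 3 <;> field_simp
  ring

theorem attenuated_ray_transform_local_injective_ball_general (hx₀ : ‖x₀‖ = 1) (hv₀ : ‖v₀‖ = 1)
    (hx₀v₀ : ⟪x₀, v₀⟫ = 0) (hA : Continuous A) (hA_analytic : AnalyticAt ℝ A (x₀, v₀, x₀))
    (hf : Continuous f) (hf_supp : Function.support f ⊆ Metric.closedBall 0 1)
    (h_vanish : ∃ δ > (0 : ℝ), ∀ v : H, ‖v‖ = 1 → ‖v - v₀‖ < δ → ∀ p : H, ⟪p, v⟫ = 0 →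
      ‖p - x₀‖ < δ → AttenuatedRayTransformVanishes A f p v) :
    ∃ ε > (0 : ℝ), ∀ x : H, ‖x - x₀‖ < ε → f x = 0 := by
  obtain ⟨δ, hδ, h_vanish⟩ := h_vanish
  have hf₀ (x : H) (hx : 1 < ‖x‖) : f x = 0 :=
    Function.notMem_support.mp fun h => hx.not_ge (mem_closedBall_zero_iff.mp (hf_supp h))
  obtain ⟨C, h_series⟩ :=
    exists_hasMajorizedSeries_rescale (analyticAt_tiltedAttenuation hA_analytic)
  have h_small : ∀ᶠ r in 𝓝[>] (0 : ℝ), r * C < 1 / 4 ∧ r < 1 := by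
    refine nhdsWithin_le_nhds (Filter.Eventually.and ?_ (eventually_lt_nhds one_pos))
    exact (continuous_mul_const C).continuousAt.eventually_lt_const (by simp)
  obtain ⟨r, hr_pos, hr_series, hr_near, hrC, hr₁⟩ := (eventually_mem_nhdsWithin.and
    (h_series.and ((eventually_norm_tiltedLine_sub_lt x₀ v₀ hδ).and h_small))).exists
  have hr : 0 < r := hr_pos
  have r_sq_le : r ^ 2 ≤ r := by nlinarith
  refine ⟨r ^ 2 / 16, by positivity, fun x hx => ?_⟩
  obtain ⟨z, α, σ, hzx₀, hzv₀, hz, hσ, rfl⟩ := exists_eq_parabolicPoint hx₀ hv₀ hx₀v₀ x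
  have hzr : ‖z‖ ≤ r := by linarith
  refine eq_zero_of_attenuatedRayTransformVanishes_tiltedLines hx₀ hv₀ hx₀v₀ hzx₀ hzv₀ hA hf hf₀ hr
    (hr_series z hzr) hrC (fun a q ha hq => ?_) (by linarith)
  obtain ⟨direction_near, foot_near⟩ := hr_near z a q hzr ha (hq.trans r_sq_le)
  exact h_vanish _ (norm_tiltedDirection hx₀ hv₀ hx₀v₀ a) direction_near _
    (inner_tiltedFoot_tiltedDirection hx₀ hv₀ hx₀v₀ hzx₀ hzv₀ a q) foot_near

end RayTransform

section MatrixAttenuation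

-- The sup norm on matrices is not submultiplicative, so the algebra norm used below is the
-- `ℓ^∞`-operator norm. Both induce the product topology, hence `HasDerivAt` does not distinguish
-- them, but analyticity refers to the norm itself and has to be transferred.
lemma analyticOnNhd_linftyOp {E m n : Type*} [NormedAddCommGroup E] [NormedSpace ℝ E] [Fintype m]
    [Fintype n] {A : E → Matrix m n ℂ} {s : Set E} (hA : AnalyticOnNhd ℝ A s) :
    @AnalyticOnNhd ℝ E (Matrix m n ℂ) _ _ _ Matrix.linftyOpNormedAddCommGroup
      Matrix.linftyOpNormedSpace A s :=
  @ContinuousLinearMap.comp_analyticOnNhd ℝ E (Matrix m n ℂ) (Matrix m n ℂ) _ _ _ _ _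
    Matrix.linftyOpNormedAddCommGroup Matrix.linftyOpNormedSpace _ _ (.id ℝ _) hA

attribute [local instance] Matrix.linftyOpNormedAddCommGroup Matrix.linftyOpNormedSpace
  Matrix.linftyOpNormedRing Matrix.linftyOpNormedAlgebra

open scoped Matrix.Module

theorem exists_eq_zero_of_matrix_attenuated_integral_eq_zero {H ι : Type*} [NormedAddCommGroup H]
    [InnerProductSpace ℝ H] [Fintype ι] [DecidableEq ι] [Nonempty ι] {x₀ v₀ : H}
    (hx₀ : ‖x₀‖ = 1) (hv₀ : ‖v₀‖ = 1) (hx₀v₀ : ⟪x₀, v₀⟫ = 0) {A : H × H × H → Matrix ι ι ℂ}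
    (hA : AnalyticOnNhd ℝ A univ) {f : H → (ι → ℂ)} (hf : Continuous f)
    (hf_supp : Function.support f ⊆ Metric.closedBall 0 1)
    (h_vanish : ∃ δ > (0 : ℝ), ∀ v : H, ‖v‖ = 1 → ‖v - v₀‖ < δ → ∀ p : H, ⟪p, v⟫ = 0 →
      ‖p - x₀‖ < δ → ∀ U : ℝ → Matrix ι ι ℂ,
        (∀ t : ℝ, HasDerivAt U (-(A (p, v, p + t • v) * U t)) t) → U 0 = 1 →
        (∀ t : ℝ, IsUnit (U t)) → ∫ t : ℝ, (U t)⁻¹ *ᵥ f (p + t • v) = 0) :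
    ∃ ε > (0 : ℝ), ∀ x : H, ‖x - x₀‖ < ε → f x = 0 := by
  have : IsBoundedSMul (Matrix ι ι ℂ) (ι → ℂ) := .of_norm_smul_le linfty_opNorm_mulVec
  simp only [nonsing_inv_eq_ringInverse] at h_vanish
  exact attenuated_ray_transform_local_injective_ball_general hx₀ hv₀ hx₀v₀
    (continuousOn_univ.mp hA.continuousOn) (hA _ (mem_univ _)) hf hf_supp h_vanish

end MatrixAttenuation

/-- Local injectivity of the attenuated ray transform with a real-analytic matrix
attenuation near a strictly convex boundary point of the closed unit ball in ℝⁿ: if the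
attenuated line integrals vanish for all lines near the tangent line at the glancing
direction `(x₀, v₀)`, then `f` vanishes near `x₀`. -/
theorem attenuated_ray_transform_local_injective_ball
    (n N : ℕ) (hn : 2 ≤ n) (hN : 1 ≤ N)
    (x₀ v₀ : EuclideanSpace ℝ (Fin n))
    (hx₀ : ‖x₀‖ = 1) (hv₀ : ‖v₀‖ = 1) (hx₀v₀ : ⟪x₀, v₀⟫ = 0)
    (A : EuclideanSpace ℝ (Fin n) × EuclideanSpace ℝ (Fin n) × EuclideanSpace ℝ (Fin n) →
      Matrix (Fin N) (Fin N) ℂ)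
    (hAanalytic : AnalyticOnNhd ℝ A Set.univ)
    (f : EuclideanSpace ℝ (Fin n) → (Fin N → ℂ))
    (hf : Continuous f)
    (hsupp : Function.support f ⊆ Metric.closedBall (0 : EuclideanSpace ℝ (Fin n)) 1)
    (hint : ∃ δ > (0 : ℝ), ∀ v : EuclideanSpace ℝ (Fin n), ‖v‖ = 1 → ‖v - v₀‖ < δ →
      ∀ p : EuclideanSpace ℝ (Fin n), ⟪p, v⟫ = 0 → ‖p - x₀‖ < δ →
        ∀ U : ℝ → Matrix (Fin N) (Fin N) ℂ,
          (∀ t : ℝ, HasDerivAt U (-(A (p, v, p + t • v) * U t)) t) →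
          U 0 = 1 → (∀ t : ℝ, IsUnit (U t)) →
          (∫ t : ℝ, (U t)⁻¹ *ᵥ f (p + t • v)) = 0) :
    ∃ ε > (0 : ℝ), ∀ x : EuclideanSpace ℝ (Fin n), ‖x - x₀‖ < ε → f x = 0 := by
  have : Nonempty (Fin N) := ⟨⟨0, hN⟩⟩
  exact exists_eq_zero_of_matrix_attenuated_integral_eq_zero hx₀ hv₀ hx₀v₀
    (analyticOnNhd_linftyOp hAanalytic) hf hsupp hint
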